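/- arXiv:2112.05055 — 2 statements merged into one kernel-verified Lean document; each statement's English description precedes it below -/
import Mathlib

section
/- Let 𝒯 be an admissible T-mesh, let i ∈ {1,…,d} and n ∈ {0,…,N_i} with ATJ_i(n) nonempty, and let x ∈ ATJ_i(n). Then there exist an anchor A ∈ A_p with x ∈ supp(A) and an i-orthogonal T-junction T ∈ 𝕋_i with associated cell Q = ascell(T) and k = pdir(T) such that: (1) cl(T) ∩ conv(P_{i,n}(A) ∪ {x}) ≠ ∅; (2) Q_k ∩ conv(A_k ∪ {x_k}) ≠ ∅; (3) there exists y ∈ A_k with y ≠ x_k. -/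
/-!
Each mesh satisfies the frontier condition: an entity meeting the closure of another entity is
contained in that closure. This is an invariant of bisection, since all interval components are
dyadic (`Dy`), and a dyadic interval properly contained in another one does not cross its midpoint
(`Dy.half`). It is proved in `meshInv_step` and `TMesh.frontier_condition`.

Let `x ∈ ATJ_i(n)`. One anchor `A₁` around `x` has `P_{i,n}(A₁) ⊆ Sk_i`, and another one `A₂` has
a point of `P_{i,n}(A₂)` outside `Sk_i`. According to whether `x ∉ Sk_i` or `x ∈ Sk_i`, the anchor
`A₁` or `A₂` provides a segment in the slice `S_i(n)` joining `x` to a point of `P_{i,n}(A)` and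
having exactly one endpoint in `Sk_i`. Follow this segment from its endpoint `u` off the closed set
`Sk_i` to the first point `z` in `Sk_i`. Close to `z`, the slice consists of (at most) `2^(d-1)`
orthants, represented by the generic points at distance `1/2` of `z` in the integral coordinates.
One of these lies in an `i`-orthogonal hyperface, and those on the side of `u` lie in cells. Moving
the coordinates one at a time to the side of `u`, at some direction `k` the point passes
from a hyperface `F` to a cell `Q` (`exists_tjunction_on_segment`). By construction
`u_k ≠ z_k`, and `Q_k` lies on the side of `u_k`.

The entity `J` between the two generic points has `z` in its closure, and the frontier condition
gives `J ⊆ cl F ∩ cl Q`. Therefore its singleton components are exactly those in directions `i`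
and `k`, and `Q` fills one of the four places for a hyperface around `J`; so `J` is a T-junction
with associated cell `Q` and pointing direction `k` (`tjunction_of_adjacent`).
-/

open Set

namespace TSpline

/-- A box in `ℝ^d`, given componentwise. -/
abbrev Box (d : ℕ) := Fin d → Set ℝ

/-- The subset of `ℝ^d` determined by a box. -/
def toSet {d : ℕ} (E : Box d) : Set (Fin d → ℝ) := Set.pi Set.univ E

/-- The closed index domain `cl Ω = ∏ₖ [0, Nₖ]`. -/
def domain {d : ℕ} (N : Fin d → ℕ) : Set (Fin d → ℝ) :=
  Set.pi Set.univ (fun k => Set.Icc (0 : ℝ) (N k))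

/-- The boundary `∂Ω` of the index domain. -/
def bdryDomain {d : ℕ} (N : Fin d → ℕ) : Set (Fin d → ℝ) := frontier (domain N)

/-- A component which is an integer singleton `{n}`, `0 ≤ n ≤ Nₖ`. -/
def IsSingletonComp (Nk : ℕ) (S : Set ℝ) : Prop :=
  ∃ n : ℕ, n ≤ Nk ∧ S = {(n : ℝ)}

/-- A component which is an open interval with integer endpoints in `[0, Nₖ]`. -/
def IsIntervalComp (Nk : ℕ) (S : Set ℝ) : Prop :=
  ∃ a b : ℕ, a < b ∧ b ≤ Nk ∧ S = Set.Ioo (a : ℝ) (b : ℝ)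

/-- A mesh entity: every component is an integer singleton or an open integer interval. -/
def IsMeshEntity {d : ℕ} (N : Fin d → ℕ) (E : Box d) : Prop :=
  ∀ k, IsSingletonComp (N k) (E k) ∨ IsIntervalComp (N k) (E k)

/-- The directions in which an entity has a singleton component. -/
def singDirs {d : ℕ} (E : Box d) : Set (Fin d) := {i | ∃ r : ℝ, E i = {r}}

/-- Split all entities of `M` contained in the region `D` whose `j`-th component is `Q j`
into the three children obtained by bisecting the `j`-th component at `m`. -/
def midSplit {d : ℕ} (M : Set (Box d)) (Q : Box d) (j : Fin d) (m : ℝ) (D : Box d) :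
    Set (Box d) :=
  (M \ {E | E ∈ M ∧ (∀ k, E k ⊆ D k) ∧ E j = Q j}) ∪
  ⋃ E ∈ {E | E ∈ M ∧ (∀ k, E k ⊆ D k) ∧ E j = Q j},
    ({Function.update E j (Set.Ioo (sInf (Q j)) m),
      Function.update E j {m},
      Function.update E j (Set.Ioo m (sSup (Q j)))} : Set (Box d))

/-- One symmetric bisection of a `d`-dimensional cell with integer midpoint. -/
def BisectStep {d : ℕ} (N : Fin d → ℕ) (M M' : Set (Box d)) : Prop :=
  ∃ Q ∈ M, ∃ j : Fin d, ∃ a b mid : ℕ,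
    (∀ k, IsIntervalComp (N k) (Q k)) ∧
    Q j = Set.Ioo (a : ℝ) (b : ℝ) ∧ a + b = 2 * mid ∧
    M' = midSplit M Q j (mid : ℝ) (fun k => closure (Q k))

/-- A tensor-product mesh with integer breakpoints. -/
def IsTensorMesh {d : ℕ} (N : Fin d → ℕ) (M : Set (Box d)) : Prop :=
  ∃ G : Fin d → Finset ℕ,
    (∀ k, 0 ∈ G k ∧ N k ∈ G k ∧ ∀ n ∈ G k, n ≤ N k) ∧
    M = {E | ∀ k, (∃ n ∈ G k, E k = {(n : ℝ)}) ∨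
          (∃ a ∈ G k, ∃ b ∈ G k, a < b ∧ (∀ c ∈ G k, c ≤ a ∨ b ≤ c) ∧
            E k = Set.Ioo (a : ℝ) (b : ℝ))}

/-- A T-mesh of the index domain: a finite disjoint partition of `cl Ω` into mesh
entities, obtained from a tensor-product mesh by repeated symmetric bisections. -/
structure TMesh (d : ℕ) (N : Fin d → ℕ) where
  entities : Set (Box d)
  finite : entities.Finite
  mem_entity : ∀ E ∈ entities, IsMeshEntity N E
  union_eq : (⋃ E ∈ entities, toSet E) = domain N
  pairwise_disjoint : ∀ E ∈ entities, ∀ F ∈ entities, E ≠ F → toSet E ∩ toSet F = ∅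
  constructed : ∃ M₀ : Set (Box d), IsTensorMesh N M₀ ∧
    Relation.ReflTransGen (BisectStep N) M₀ entities

variable {d : ℕ} {N : Fin d → ℕ}

/-- `H^k`: the entities with exactly `d - k` singleton components. -/
def Hdim (T : TMesh d N) (k : ℕ) : Set (Box d) :=
  {E ∈ T.entities | (singDirs E).ncard = d - k}

/-- The `j`-orthogonal skeleton `Sk_j`. -/
def skel (T : TMesh d N) (j : Fin d) : Set (Fin d → ℝ) :=
  ⋃ F ∈ {F ∈ Hdim T (d - 1) | ∃ r : ℝ, F j = {r}}, closure (toSet F)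

/-- The valence of a `(d-2)`-dimensional entity: the number of hyperfaces in whose
boundary it lies. -/
noncomputable def valence (T : TMesh d N) (J : Box d) : ℕ :=
  {F ∈ Hdim T (d - 1) | toSet J ⊆ frontier (toSet F)}.ncard

/-- A T-junction (hanging interface). -/
def IsTJunction (T : TMesh d N) (J : Box d) : Prop :=
  J ∈ Hdim T (d - 2) ∧ ¬ toSet J ⊆ bdryDomain N ∧ valence T J < 4

/-- `TJData T J Q i j`: `Q` is an associated cell of the T-junction `J`, with orthogonal
direction `i` and pointing direction `j`. -/
def TJData (T : TMesh d N) (J Q : Box d) (i j : Fin d) : Prop :=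
  Q ∈ Hdim T d ∧ toSet J ⊆ frontier (toSet Q) ∧
  closure (toSet J) ∩ Set.pi Set.univ (fun k => frontier (Q k)) = ∅ ∧
  i ≠ j ∧ (∃ r : ℝ, J i = {r}) ∧ (∃ r : ℝ, J j = {r}) ∧
  J i ⊆ Q i ∧ J i ≠ Q i ∧ J j ⊆ frontier (Q j)

/-- `⌊(p_k + 1)/2⌋`. -/
def halfdeg (p : Fin d → ℕ) (k : Fin d) : ℕ := (p k + 1) / 2

/-- The active region `AR_p`. -/
def activeRegion (N p : Fin d → ℕ) : Set (Fin d → ℝ) :=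
  Set.pi Set.univ (fun k => Set.Icc (halfdeg p k : ℝ) ((N k : ℝ) - (halfdeg p k : ℝ)))

/-- The slice `S_k(n)`. -/
def slice (N : Fin d → ℕ) (k : Fin d) (n : ℕ) : Set (Fin d → ℝ) :=
  {x ∈ domain N | x k = (n : ℝ)}

/-- The `k`-th frame region `FR^(k)`. -/
def frameRegion (N p : Fin d → ℕ) (k : Fin d) : Set (Fin d → ℝ) :=
  {x ∈ domain N | x k ∈ Set.Icc (0 : ℝ) (halfdeg p k : ℝ) ∪
      Set.Icc ((N k : ℝ) - (halfdeg p k : ℝ)) (N k : ℝ)}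

/-- Admissibility of a T-mesh. -/
def Admissible (p : Fin d → ℕ) (T : TMesh d N) : Prop :=
  (∀ k : Fin d, ∀ J Q : Box d, ∀ i j : Fin d, IsTJunction T J → TJData T J Q i j →
      (i = k ∨ j = k) → ¬ toSet J ⊆ frameRegion N p k) ∧
  (∀ k : Fin d, ∀ n : ℕ, (n ≤ halfdeg p k ∨ (N k - halfdeg p k ≤ n ∧ n ≤ N k)) →
      slice N k n ⊆ skel T k)

/-- Anchors of degree `p`. -/
def IsAnchor (p : Fin d → ℕ) (T : TMesh d N) (A : Box d) : Prop :=
  A ∈ T.entities ∧ toSet A ⊆ activeRegion N p ∧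
  ∀ j : Fin d, (∃ r : ℝ, A j = {r}) ↔ Odd (p j)

/-- `P_{j,n}(E)`: replace the `j`-th component of `E` by `{n}`. -/
def proj {d : ℕ} (E : Box d) (j : Fin d) (n : ℕ) : Box d :=
  Function.update E j {(n : ℝ)}

/-- The global knot vector `gv_j(E)` (as a set of integer indices). -/
def gv (T : TMesh d N) (j : Fin d) (E : Box d) : Set ℕ :=
  {n | n ≤ N j ∧ toSet (proj E j n) ⊆ skel T j}

/-- `V` is a block of consecutive entries of `G`. -/
def IsBlockOf (V G : Set ℕ) : Prop :=
  V ⊆ G ∧ V.Finite ∧ ∀ g ∈ G, ∀ a ∈ V, ∀ b ∈ V, a ≤ g → g ≤ b → g ∈ V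

/-- Two knot vectors overlap (`⋈`): both occur as blocks of consecutive entries of a
common knot vector. -/
def Overlaps (V₁ V₂ : Set ℕ) : Prop :=
  ∃ W : Set ℕ, W.Finite ∧ IsBlockOf V₁ W ∧ IsBlockOf V₂ W

/-- The convex hull in `ℝ` of a set of integer indices. -/
def convOf (V : Set ℕ) : Set ℝ := convexHull ℝ ((fun n : ℕ => (n : ℝ)) '' V)

/-- The local knot vector of an anchor `A` in direction `j`: the block of `p_j + 2`
consecutive entries of `gv_j(A)` whose entry of rank `⌊(p_j+1)/2⌋` is `inf A_j`. -/
def IsAnchorKV (T : TMesh d N) (p : Fin d → ℕ) (A : Box d) (j : Fin d) (V : Set ℕ) : Prop :=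
  IsBlockOf V (gv T j A) ∧ V.ncard = p j + 2 ∧
  ∃ a : ℕ, (a : ℝ) = sInf (A j) ∧ a ∈ V ∧ {v ∈ V | v < a}.ncard = halfdeg p j

open Classical in
noncomputable def anchorKV (T : TMesh d N) (p : Fin d → ℕ) (A : Box d) (j : Fin d) :
    Set ℕ :=
  if h : ∃ V, IsAnchorKV T p A j V then h.choose else ∅

/-- The index support of an anchor. -/
noncomputable def suppA (T : TMesh d N) (p : Fin d → ℕ) (A : Box d) : Set (Fin d → ℝ) :=
  Set.pi Set.univ (fun k => convOf (anchorKV T p A k))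

/-- The local knot vector of a T-junction `J` (with associated cell `Q`, orthogonal
direction `i`, pointing direction `j`) in direction `k`. -/
def IsTJKV (T : TMesh d N) (p : Fin d → ℕ) (J Q : Box d) (i j k : Fin d) (V : Set ℕ) :
    Prop :=
  if k = i then ∃ t : ℕ, J i = {(t : ℝ)} ∧ V = {t}
  else if k = j then
    IsBlockOf V (gv T j J) ∧ V.ncard = p j + 1 ∧
    ((Even (p j) ∧ ∃ t : ℕ, J j = {(t : ℝ)} ∧ t ∈ V ∧ {v ∈ V | v < t}.ncard = p j / 2) ∨
     (Odd (p j) ∧ ∃ a b : ℕ, (a : ℝ) = sInf (Q j) ∧ (b : ℝ) = sSup (Q j) ∧ a ∈ V ∧ b ∈ V ∧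
        {v ∈ V | v < a}.ncard = p j / 2 ∧ {v ∈ V | v < b}.ncard = p j / 2 + 1))
  else
    IsBlockOf V (gv T k J) ∧ V.ncard = p k + 2 + p k % 2 ∧
    ∃ a b : ℕ, a ∈ V ∧ b ∈ V ∧ J k = Set.Ioo (a : ℝ) (b : ℝ) ∧
      {v ∈ V | v < a}.ncard = (p k + 1) / 2 ∧ {v ∈ V | v < b}.ncard = (p k + 1) / 2 + 1

/-- Local knot vector of a T-junction, quantifying over the (unique) associated data. -/
def IsTJKVFull (T : TMesh d N) (p : Fin d → ℕ) (J : Box d) (k : Fin d) (V : Set ℕ) :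
    Prop :=
  ∃ Q : Box d, ∃ i j : Fin d, TJData T J Q i j ∧ IsTJKV T p J Q i j k V

open Classical in
noncomputable def tjKV (T : TMesh d N) (p : Fin d → ℕ) (J : Box d) (k : Fin d) : Set ℕ :=
  if h : ∃ V, IsTJKVFull T p J k V then h.choose else ∅

/-- The geometric T-junction extension `GTJ(J)`. -/
noncomputable def GTJ (T : TMesh d N) (p : Fin d → ℕ) (J : Box d) : Set (Fin d → ℝ) :=
  Set.pi Set.univ (fun k => convOf (tjKV T p J k))

/-- `J` is a T-junction with orthogonal direction `i` and pointing direction `j`. -/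
def HasDirs (T : TMesh d N) (J : Box d) (i j : Fin d) : Prop :=
  IsTJunction T J ∧ ∃ Q : Box d, TJData T J Q i j

/-- Strong geometric analysis-suitability. -/
def SGAS (T : TMesh d N) (p : Fin d → ℕ) : Prop :=
  ∀ J₁ J₂ : Box d, ∀ i₁ j₁ i₂ j₂ : Fin d,
    HasDirs T J₁ i₁ j₁ → HasDirs T J₂ i₂ j₂ → i₁ ≠ i₂ →
    GTJ T p J₁ ∩ GTJ T p J₂ = ∅

/-- Weak geometric analysis-suitability. -/
def WGAS (T : TMesh d N) (p : Fin d → ℕ) : Prop :=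
  ∀ J₁ J₂ : Box d, ∀ i₁ j₁ i₂ j₂ : Fin d,
    HasDirs T J₁ i₁ j₁ → HasDirs T J₂ i₂ j₂ → i₁ ≠ i₂ → j₁ ≠ j₂ →
    GTJ T p J₁ ∩ GTJ T p J₂ = ∅

/-- The abstract T-junction extension `ATJ_j(n)`. -/
noncomputable def ATJ (T : TMesh d N) (p : Fin d → ℕ) (j : Fin d) (n : ℕ) :
    Set (Fin d → ℝ) :=
  slice N j n ∩
  (⋃ A ∈ {A : Box d | IsAnchor p T A ∧ n ∈ gv T j A}, suppA T p A) ∩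
  (⋃ A ∈ {A : Box d | IsAnchor p T A ∧ n ∉ gv T j A}, suppA T p A)

/-- `ATJ_j = ⋃ₙ ATJ_j(n)`. -/
noncomputable def ATJfull (T : TMesh d N) (p : Fin d → ℕ) (j : Fin d) :
    Set (Fin d → ℝ) :=
  ⋃ n ∈ Set.Iic (N j), ATJ T p j n

/-- Abstract analysis-suitability. -/
def AAS (T : TMesh d N) (p : Fin d → ℕ) : Prop :=
  ∀ i j : Fin d, i ≠ j → ∀ n m : ℕ, n ≤ N i → m ≤ N j →
    ATJ T p i n ∩ ATJ T p j m = ∅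

/-- Two anchors weakly partially overlap. -/
def WeakPartOverlap (T : TMesh d N) (p : Fin d → ℕ) (A₁ A₂ : Box d) : Prop :=
  ∃ ℓ : Fin d, anchorKV T p A₁ ℓ ≠ anchorKV T p A₂ ℓ ∧
    Overlaps (anchorKV T p A₁ ℓ) (anchorKV T p A₂ ℓ)

/-- Two anchors strongly partially overlap. -/
def StrongPartOverlap (T : TMesh d N) (p : Fin d → ℕ) (A₁ A₂ : Box d) : Prop :=
  suppA T p A₁ ∩ suppA T p A₂ = ∅ ∨
  d - 1 ≤ {k : Fin d | Overlaps (anchorKV T p A₁ k) (anchorKV T p A₂ k)}.ncard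

/-- Weak dual-compatibility. -/
def WDC (T : TMesh d N) (p : Fin d → ℕ) : Prop :=
  ∀ A₁ A₂ : Box d, IsAnchor p T A₁ → IsAnchor p T A₂ → A₁ ≠ A₂ →
    WeakPartOverlap T p A₁ A₂

/-- Strong dual-compatibility. -/
def SDC (T : TMesh d N) (p : Fin d → ℕ) : Prop :=
  ∀ A₁ A₂ : Box d, IsAnchor p T A₁ → IsAnchor p T A₂ → A₁ ≠ A₂ →
    StrongPartOverlap T p A₁ A₂

/-- `Q'` is a neighboring cell of `Q` in direction `ℓ`. -/
def NeighborInDir (T : TMesh d N) (Q Q' : Box d) (ℓ : Fin d) : Prop :=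
  Q' ∈ Hdim T d ∧ Q' ≠ Q ∧
  (sSup (Q ℓ) = sInf (Q' ℓ) ∨ sSup (Q' ℓ) = sInf (Q ℓ)) ∧
  ∀ k : Fin d, k ≠ ℓ → (Q k ∩ Q' k).Nonempty

/-- Assumption A: every cell has neighbor cells in the active region in at least three
pairwise distinct directions. -/
def AssumptionA (T : TMesh d N) (p : Fin d → ℕ) : Prop :=
  ∀ Q ∈ Hdim T d, ∃ l₁ l₂ l₃ : Fin d, l₁ ≠ l₂ ∧ l₁ ≠ l₃ ∧ l₂ ≠ l₃ ∧
    ∀ l ∈ ({l₁, l₂, l₃} : Set (Fin d)),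
      ∃ Q' : Box d, NeighborInDir T Q Q' l ∧ toSet Q' ⊆ activeRegion N p

/-- The extended region `D` of Algorithm `subdiv`. -/
def extendD (N p : Fin d → ℕ) (Q : Box d) (j : Fin d) : Box d := fun ℓ =>
  closure (Q ℓ) ∪
  {x : ℝ | ℓ ≠ j ∧ sInf (Q ℓ) = (halfdeg p ℓ : ℝ) ∧
      x ∈ Set.Icc (0 : ℝ) (halfdeg p ℓ : ℝ)} ∪
  {x : ℝ | ℓ ≠ j ∧ sSup (Q ℓ) = (N ℓ : ℝ) - (halfdeg p ℓ : ℝ) ∧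
      x ∈ Set.Icc ((N ℓ : ℝ) - (halfdeg p ℓ : ℝ)) (N ℓ : ℝ)}

/-- The entity set produced by Algorithm `subdiv(𝒯, Q, j)`. -/
def subdivEntities (N p : Fin d → ℕ) (M : Set (Box d)) (Q : Box d) (j : Fin d) :
    Set (Box d) :=
  midSplit M Q j ((sInf (Q j) + sSup (Q j)) / 2) (extendD N p Q j)

open Classical in
/-- The componentwise minimal bounding box `M(E,F)`. -/
noncomputable def MBox {d : ℕ} (E F : Box d) : Box d := fun ℓ =>
  if (E ℓ ∩ F ℓ).Nonempty then E ℓ ∩ F ℓ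
  else if sSup (E ℓ) ≤ sInf (F ℓ) then Set.Icc (sSup (E ℓ)) (sInf (F ℓ))
  else Set.Icc (sSup (F ℓ)) (sInf (E ℓ))

/-- `V` is the local knot vector of `E` (an anchor or a T-junction) in direction `j`. -/
def IsLocalKVOf (T : TMesh d N) (p : Fin d → ℕ) (E : Box d) (j : Fin d) (V : Set ℕ) :
    Prop :=
  (IsAnchor p T E ∧ IsAnchorKV T p E j V) ∨
  (IsTJunction T E ∧ IsTJKVFull T p E j V)

end TSpline

namespace TSpline

/-! ### Dyadic intervals -/

/-- `Desc a b c e`: the interval `(c, e)` arises from `(a, b)` by finitely many (possibly zero)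
passages to a half with integer midpoint. -/
inductive Desc : ℕ → ℕ → ℕ → ℕ → Prop
  | refl (a b : ℕ) : a < b → Desc a b a b
  | left (a b m c e : ℕ) : a < b → a + b = 2 * m → Desc a m c e → Desc a b c e
  | right (a b m c e : ℕ) : a < b → a + b = 2 * m → Desc m b c e → Desc a b c e

/-- The intervals `(a, b)` obtained by repeated bisection from the intervals between
consecutive breakpoints in `G`. -/
inductive Dy (G : Finset ℕ) : ℕ → ℕ → Prop
  | base (a b : ℕ) : a ∈ G → b ∈ G → a < b → (∀ c ∈ G, c ≤ a ∨ b ≤ c) → Dy G a b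
  | left (a b m : ℕ) : Dy G a b → a < b → a + b = 2 * m → Dy G a m
  | right (a b m : ℕ) : Dy G a b → a < b → a + b = 2 * m → Dy G m b

lemma Dy.lt {G : Finset ℕ} {a b : ℕ} (h : Dy G a b) : a < b := by
  induction h with
  | base => assumption
  | left => omega
  | right => omega

lemma Desc.bounds {a b c e : ℕ} (h : Desc a b c e) : a ≤ c ∧ c < e ∧ e ≤ b := by
  induction h with
  | refl => omega
  | left => omega
  | right => omega

lemma Desc.halve {a b c e : ℕ} (h : Desc a b c e) :
    ∀ m, c + e = 2 * m → Desc a b c m ∧ Desc a b m e := by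
  induction h with
  | refl a b hab =>
    intro m hm
    exact ⟨.left a b m _ _ hab hm (.refl _ _ (by omega)),
      .right a b m _ _ hab hm (.refl _ _ (by omega))⟩
  | left a b q c e hab hq _ ih =>
    intro m hm
    exact ⟨.left a b q _ _ hab hq (ih m hm).1, .left a b q _ _ hab hq (ih m hm).2⟩
  | right a b q c e hab hq _ ih =>
    intro m hm
    exact ⟨.right a b q _ _ hab hq (ih m hm).1, .right a b q _ _ hab hq (ih m hm).2⟩

lemma Dy.base_cases {G : Finset ℕ} {a b : ℕ} (ha : a ∈ G) (hb : b ∈ G) (hab : a < b)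
    (hc : ∀ c ∈ G, c ≤ a ∨ b ≤ c) {c e : ℕ} (h : Dy G c e) :
    e ≤ a ∨ b ≤ c ∨ Desc a b c e := by
  induction h with
  | base c e h1 h2 h3 h4 =>
    have := h4 a ha
    have := h4 b hb
    have := hc c h1
    have := hc e h2
    by_cases hh : c = a ∧ e = b
    · obtain ⟨rfl, rfl⟩ := hh
      exact .inr (.inr (.refl _ _ hab))
    · omega
  | left c e m _ _ hm ih =>
    rcases ih with h | h | h
    · omega
    · omega
    · exact .inr (.inr (h.halve m hm).1)
  | right c e m _ _ hm ih =>
    rcases ih with h | h | h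
    · omega
    · omega
    · exact .inr (.inr (h.halve m hm).2)

/-- Two dyadic intervals are disjoint, or one descends from the other. In the last alternative
only the consequence that `(a, b)` lies in a half of `(c, e)` is recorded. -/
lemma Dy.cases_pair {G : Finset ℕ} {a b : ℕ} (h : Dy G a b) :
    ∀ c e, Dy G c e → e ≤ a ∨ b ≤ c ∨ Desc a b c e ∨
      ∃ m, c + e = 2 * m ∧ ((c ≤ a ∧ b ≤ m) ∨ (m ≤ a ∧ b ≤ e)) := by
  induction h with
  | base a b ha hb hab hc =>
    intro c e hce
    rcases Dy.base_cases ha hb hab hc hce with h | h | h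
    · exact .inl h
    · exact .inr (.inl h)
    · exact .inr (.inr (.inl h))
  | left a b m _ hab hm ih =>
    intro c e hce
    have hlt := hce.lt
    rcases ih c e hce with h | h | h | ⟨q, hq, h⟩
    · exact .inl h
    · right; left; omega
    · cases h with
      | refl => exact .inr (.inr (.inr ⟨m, hm, by omega⟩))
      | left _ _ m' _ _ hab' hm' h' =>
        obtain rfl : m = m' := by omega
        exact .inr (.inr (.inl h'))
      | right _ _ m' _ _ hab' hm' h' =>
        have := h'.bounds
        right; left; omega
    · exact .inr (.inr (.inr ⟨q, hq, by omega⟩))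
  | right a b m _ hab hm ih =>
    intro c e hce
    have hlt := hce.lt
    rcases ih c e hce with h | h | h | ⟨q, hq, h⟩
    · left; omega
    · exact .inr (.inl h)
    · cases h with
      | refl => exact .inr (.inr (.inr ⟨m, hm, by omega⟩))
      | left _ _ m' _ _ hab' hm' h' =>
        have := h'.bounds
        left; omega
      | right _ _ m' _ _ hab' hm' h' =>
        obtain rfl : m = m' := by omega
        exact .inr (.inr (.inl h'))
    · exact .inr (.inr (.inr ⟨q, hq, by omega⟩))

/-- A dyadic interval properly contained in another one does not cross its midpoint. -/
lemma Dy.half {G : Finset ℕ} {a b c e m : ℕ} (h : Dy G a b) (h' : Dy G c e)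
    (hac : a ≤ c) (heb : e ≤ b) (hne : ¬ (c = a ∧ e = b)) (hm : a + b = 2 * m) :
    e ≤ m ∨ m ≤ c := by
  have := h.lt
  have := h'.lt
  rcases h.cases_pair c e h' with h | h | h | ⟨q, hq, h⟩
  · omega
  · omega
  · cases h with
    | refl => exact absurd ⟨rfl, rfl⟩ hne
    | left _ _ m' _ _ hab' hm' h' =>
      have := h'.bounds
      omega
    | right _ _ m' _ _ hab' hm' h' =>
      have := h'.bounds
      omega
  · omega

/-! ### The frontier condition -/

lemma closure_Ioo_nat {a b : ℕ} (h : a < b) :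
    closure (Ioo (a : ℝ) (b : ℝ)) = Icc (a : ℝ) b :=
  closure_Ioo (by exact_mod_cast h.ne)

lemma Ioo_nat_inj {a b c e : ℕ} (hab : a < b) (h : Ioo (a : ℝ) (b : ℝ) = Ioo (c : ℝ) (e : ℝ)) :
    c = a ∧ e = b := by
  have hab' : (a : ℝ) < b := by exact_mod_cast hab
  have hne : (Ioo (c : ℝ) (e : ℝ)).Nonempty := h ▸ nonempty_Ioo.2 hab'
  have hce := nonempty_Ioo.1 hne
  have h1 := congrArg sInf h
  have h2 := congrArg sSup h
  rw [csInf_Ioo hab', csInf_Ioo hce] at h1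
  rw [csSup_Ioo hab', csSup_Ioo hce] at h2
  exact ⟨by exact_mod_cast h1.symm, by exact_mod_cast h2.symm⟩

lemma Ioo_nat_ne_singleton {a b : ℕ} (hab : a < b) (r : ℝ) : Ioo (a : ℝ) (b : ℝ) ≠ {r} := by
  have hab' : (a : ℝ) < b := by exact_mod_cast hab
  intro h
  exact (Ioo_infinite hab') (h ▸ finite_singleton r)

/-- The invariant kept by bisections: every component of an entity is an integer singleton or a
dyadic interval, and an entity meeting the closure of another one is contained in it. -/
def MeshInv {d : ℕ} (G : Fin d → Finset ℕ) (M : Set (Box d)) : Prop :=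
  (∀ E ∈ M, ∀ k, (∃ n : ℕ, E k = {(n : ℝ)}) ∨
    ∃ a b : ℕ, Dy (G k) a b ∧ E k = Ioo (a : ℝ) (b : ℝ)) ∧
  ∀ E ∈ M, ∀ F ∈ M, (∀ k, (E k ∩ closure (F k)).Nonempty) → ∀ k, E k ⊆ closure (F k)

lemma meshInv_tensor {d : ℕ} {G : Fin d → Finset ℕ} :
    MeshInv G {E : Box d | ∀ k, (∃ n ∈ G k, E k = {(n : ℝ)}) ∨
          (∃ a ∈ G k, ∃ b ∈ G k, a < b ∧ (∀ c ∈ G k, c ≤ a ∨ b ≤ c) ∧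
            E k = Set.Ioo (a : ℝ) (b : ℝ))} := by
  refine ⟨?_, ?_⟩
  · intro E hE k
    rcases hE k with ⟨n, -, h⟩ | ⟨a, ha, b, hb, hab, hc, h⟩
    · exact .inl ⟨n, h⟩
    · exact .inr ⟨a, b, .base a b ha hb hab hc, h⟩
  · intro E hE F hF hEF k
    obtain ⟨y, hy, hy'⟩ := hEF k
    rcases hE k with ⟨n, hn, h⟩ | ⟨a, ha, b, hb, hab, hc, h⟩
    · rw [h, mem_singleton_iff] at hy
      rw [h, singleton_subset_iff, ← hy]
      exact hy'
    · rw [h] at hy ⊢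
      rcases hF k with ⟨n, hn, h'⟩ | ⟨a', ha', b', hb', hab', hc', h'⟩
      · rw [h', closure_singleton, mem_singleton_iff] at hy'
        have h1 := hy.1
        have h2 := hy.2
        rw [hy'] at h1 h2
        have h1 : a < n := by exact_mod_cast h1
        have h2 : n < b := by exact_mod_cast h2
        have := hc n hn
        omega
      · rw [h', closure_Ioo_nat hab'] at hy' ⊢
        have h1 : a < b' := by exact_mod_cast hy.1.trans_le hy'.2
        have h2 : a' < b := by exact_mod_cast hy'.1.trans_lt hy.2
        have h3 : a' ≤ a := by have := hc a' ha'; omega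
        have h4 : b ≤ b' := by have := hc b' hb'; omega
        have h3' : (a' : ℝ) ≤ a := by exact_mod_cast h3
        have h4' : (b : ℝ) ≤ b' := by exact_mod_cast h4
        exact fun t ht => ⟨h3'.trans ht.1.le, ht.2.le.trans h4'⟩

/-- Each entity of a bisected mesh is an old entity that is not split, or comes from a
split entity `E'` by replacing its `j`-th component. -/
lemma mem_midSplit {d : ℕ} {M : Set (Box d)} {Q : Box d} {j : Fin d} {m : ℝ} {D : Box d}
    {E : Box d} : E ∈ midSplit M Q j m D ↔
      (E ∈ M ∧ ((∀ k, E k ⊆ D k) → E j ≠ Q j)) ∨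
      ∃ E' ∈ M, (∀ k, E' k ⊆ D k) ∧ E' j = Q j ∧
        ∃ S : Set ℝ, E = Function.update E' j S ∧
          (S = Ioo (sInf (Q j)) m ∨ S = {m} ∨ S = Ioo m (sSup (Q j))) := by
  simp only [midSplit, mem_union, mem_sdiff, mem_ofPred_eq, mem_iUnion, mem_insert_iff,
    mem_singleton_iff, exists_prop]
  constructor
  · rintro (⟨h1, h2⟩ | ⟨E', ⟨h1, h2, h3⟩, h | h | h⟩)
    · exact .inl ⟨h1, fun h3 h4 => h2 ⟨h1, h3, h4⟩⟩
    · exact .inr ⟨E', h1, h2, h3, _, h, .inl rfl⟩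
    · exact .inr ⟨E', h1, h2, h3, _, h, .inr (.inl rfl)⟩
    · exact .inr ⟨E', h1, h2, h3, _, h, .inr (.inr rfl)⟩
  · rintro (⟨h1, h2⟩ | ⟨E', h1, h2, h3, S, h, rfl | rfl | rfl⟩)
    · exact .inl ⟨h1, fun h3 => h2 h3.2.1 h3.2.2⟩
    · exact .inr ⟨E', ⟨h1, h2, h3⟩, .inl h⟩
    · exact .inr ⟨E', ⟨h1, h2, h3⟩, .inr (.inl h)⟩
    · exact .inr ⟨E', ⟨h1, h2, h3⟩, .inr (.inr h)⟩

lemma meshInv_step {d : ℕ} {N : Fin d → ℕ} {G : Fin d → Finset ℕ} {M M' : Set (Box d)}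
    (hM : MeshInv G M) (hstep : BisectStep N M M') : MeshInv G M' := by
  obtain ⟨Q, hQ, j, a, b, m, hQint, hQj, hm, rfl⟩ := hstep
  obtain ⟨hcomp, hfc⟩ := hM
  -- The bisected interval is dyadic.
  obtain ⟨a', b', hab', -, hQj'⟩ := hQint j
  obtain ⟨rfl, rfl⟩ := Ioo_nat_inj hab' (hQj'.symm.trans hQj)
  have hdy : Dy (G j) a b := by
    rcases hcomp Q hQ j with ⟨n, h⟩ | ⟨c, e, hce, h⟩
    · exact absurd (hQj.symm.trans h) (Ioo_nat_ne_singleton hab' _)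
    · obtain ⟨rfl, rfl⟩ := Ioo_nat_inj hab' (hQj.symm.trans h)
      exact hce
  have ham : a < m := by omega
  have hmb : m < b := by omega
  have habR : (a : ℝ) < b := by exact_mod_cast hab'
  have hamR : (a : ℝ) < m := by exact_mod_cast ham
  have hmbR : (m : ℝ) < b := by exact_mod_cast hmb
  have hinf : sInf (Q j) = a := by rw [hQj, csInf_Ioo habR]
  have hsup : sSup (Q j) = b := by rw [hQj, csSup_Ioo habR]
  have hclQ : closure (Q j) = Icc (a : ℝ) b := by rw [hQj, closure_Ioo_nat hab']
  have hchild : ∀ S : Set ℝ, (S = Ioo (sInf (Q j)) (m : ℝ) ∨ S = {(m : ℝ)} ∨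
      S = Ioo (m : ℝ) (sSup (Q j))) → S ⊆ Q j := by
    rw [hinf, hsup, hQj]
    rintro S (rfl | rfl | rfl)
    · exact Ioo_subset_Ioo_right hmbR.le
    · exact singleton_subset_iff.2 ⟨hamR, hmbR⟩
    · exact Ioo_subset_Ioo_left hamR.le
  -- The parent of an entity of the new mesh.
  have hparent : ∀ E ∈ midSplit M Q j (m : ℝ) (fun k => closure (Q k)),
      ∃ E' ∈ M, (∀ k, E k ⊆ E' k) ∧ (∀ k, k ≠ j → E k = E' k) ∧
        ((E = E' ∧ ((∀ k, E' k ⊆ closure (Q k)) → E' j ≠ Q j)) ∨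
        ((∀ k, E' k ⊆ closure (Q k)) ∧ E' j = Q j ∧ (E j = Ioo (a : ℝ) m ∨ E j = {(m : ℝ)} ∨
          E j = Ioo (m : ℝ) b))) := by
    intro E hE
    rcases mem_midSplit.1 hE with ⟨h1, h2⟩ | ⟨E', h1, h2, h3, S, rfl, hS⟩
    · exact ⟨E, h1, fun k => Subset.rfl, fun _ _ => rfl, .inl ⟨rfl, h2⟩⟩
    · refine ⟨E', h1, fun k => ?_, fun k hk => Function.update_of_ne hk _ _, .inr ⟨h2, h3, ?_⟩⟩
      · by_cases hk : k = j
        · subst hk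
          rw [Function.update_self, h3]
          exact hchild S hS
        · rw [Function.update_of_ne hk]
      · rw [Function.update_self, ← hinf, ← hsup]
        exact hS
  refine ⟨?_, ?_⟩
  · intro E hE k
    obtain ⟨E', hE', -, heq, h⟩ := hparent E hE
    by_cases hk : k = j
    · subst hk
      rcases h with ⟨rfl, -⟩ | ⟨-, -, h | h | h⟩
      · exact hcomp E hE' k
      · exact .inr ⟨a, m, .left _ _ _ hdy hab' hm, h⟩
      · exact .inl ⟨m, h⟩
      · exact .inr ⟨m, b, .right _ _ _ hdy hab' hm, h⟩
    · rw [heq k hk]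
      exact hcomp E' hE' k
  · intro E hE F hF hEF
    obtain ⟨E', hE', hEsub, hEeq, hEc⟩ := hparent E hE
    obtain ⟨F', hF', hFsub, hFeq, hFc⟩ := hparent F hF
    have hEF' : ∀ k, E' k ⊆ closure (F' k) :=
      hfc E' hE' F' hF' fun k =>
        (hEF k).mono (inter_subset_inter (hEsub k) (closure_mono (hFsub k)))
    intro k
    by_cases hk : k = j
    swap
    · rw [hFeq k hk]
      exact (hEsub k).trans (hEF' k)
    subst hk
    rcases hFc with ⟨rfl, -⟩ | ⟨hFQ, hFk, hFcases⟩
    · exact (hEsub k).trans (hEF' k)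
    have hEQ : ∀ l, E' l ⊆ closure (Q l) := fun l =>
      (hEF' l).trans (closure_minimal (hFQ l) isClosed_closure)
    obtain ⟨y, hyE, hyF⟩ := hEF k
    -- The `k`-th component of `E` is a singleton or lies in one half of `Q k`.
    have hE3 : (∃ r : ℝ, E k = {r}) ∨ E k ⊆ Ioo (a : ℝ) m ∨ E k ⊆ Ioo (m : ℝ) b := by
      rcases hEc with ⟨rfl, hne⟩ | ⟨-, -, h | h | h⟩
      · rcases hcomp E hE' k with ⟨q, h⟩ | ⟨c, e, hce, h⟩
        · exact .inl ⟨q, h⟩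
        · right
          have hsub := hEQ k
          rw [hclQ, h] at hsub
          have hceR : (c : ℝ) < e := by exact_mod_cast hce.lt
          have hsub' := closure_minimal hsub isClosed_Icc
          rw [closure_Ioo_nat hce.lt, Icc_subset_Icc_iff hceR.le] at hsub'
          have hac : a ≤ c := by exact_mod_cast hsub'.1
          have heb : e ≤ b := by exact_mod_cast hsub'.2
          have hne' : ¬ (c = a ∧ e = b) := by
            rintro ⟨rfl, rfl⟩
            exact hne hEQ (h.trans hQj.symm)
          rw [h]
          rcases hdy.half hce hac heb hne' hm with h5 | h5
          · exact .inl (Ioo_subset_Ioo hsub'.1 (by exact_mod_cast h5))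
          · exact .inr (Ioo_subset_Ioo (by exact_mod_cast h5) hsub'.2)
      · exact .inr (.inl h.subset)
      · exact .inl ⟨_, h⟩
      · exact .inr (.inr h.subset)
    rcases hE3 with ⟨r, h⟩ | h | h
    · rw [h, mem_singleton_iff] at hyE
      rw [h, singleton_subset_iff, ← hyE]
      exact hyF
    · have hy := h hyE
      rcases hFcases with h' | h' | h'
      · rw [h']
        exact h.trans subset_closure
      · rw [h', closure_singleton, mem_singleton_iff] at hyF
        exact absurd hy.2 (by rw [hyF]; exact lt_irrefl _)
      · rw [h', closure_Ioo_nat hmb] at hyF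
        exact absurd hy.2 (not_lt.2 hyF.1)
    · have hy := h hyE
      rcases hFcases with h' | h' | h'
      · rw [h', closure_Ioo_nat ham] at hyF
        exact absurd hy.1 (not_lt.2 hyF.2)
      · rw [h', closure_singleton, mem_singleton_iff] at hyF
        exact absurd hy.1 (by rw [hyF]; exact lt_irrefl _)
      · rw [h']
        exact h.trans subset_closure

/-- The frontier condition: an entity that meets the closure of another entity is contained in
that closure. -/
lemma TMesh.frontier_condition {d : ℕ} {N : Fin d → ℕ} (T : TMesh d N) {E F : Box d}
    (hE : E ∈ T.entities) (hF : F ∈ T.entities) {y : Fin d → ℝ} (hyE : y ∈ toSet E)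
    (hyF : ∀ k, y k ∈ closure (F k)) (k : Fin d) : E k ⊆ closure (F k) := by
  obtain ⟨M₀, ⟨G, -, rfl⟩, hM⟩ := T.constructed
  have hinv : MeshInv G T.entities := by
    generalize T.entities = M at hM
    induction hM with
    | refl => exact meshInv_tensor
    | tail _ hstep ih => exact meshInv_step ih hstep
  exact hinv.2 E hE F hF (fun l => ⟨y l, hyE l (mem_univ l), hyF l⟩) k

end TSpline

namespace TSpline

/-! ### Entities through points -/

lemma mem_toSet {d : ℕ} {E : Box d} {y : Fin d → ℝ} : y ∈ toSet E ↔ ∀ k, y k ∈ E k := by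
  simp [toSet]

lemma mem_closure_toSet {d : ℕ} {E : Box d} {y : Fin d → ℝ} :
    y ∈ closure (toSet E) ↔ ∀ k, y k ∈ closure (E k) := by
  simp [toSet, closure_pi_set]

lemma mem_domain {d : ℕ} {N : Fin d → ℕ} {y : Fin d → ℝ} :
    y ∈ domain N ↔ ∀ k, 0 ≤ y k ∧ y k ≤ N k := by
  simp [domain, Pi.le_def, forall_and]

section Entities

variable {d : ℕ} {N : Fin d → ℕ}

lemma TMesh.eq_of_mem (T : TMesh d N) {E F : Box d} (hE : E ∈ T.entities) (hF : F ∈ T.entities)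
    {y : Fin d → ℝ} (hyE : y ∈ toSet E) (hyF : y ∈ toSet F) : E = F := by
  by_contra h
  have := T.pairwise_disjoint E hE F hF h
  exact (this ▸ (⟨hyE, hyF⟩ : y ∈ toSet E ∩ toSet F) : y ∈ (∅ : Set (Fin d → ℝ)))

lemma TMesh.exists_entity (T : TMesh d N) {y : Fin d → ℝ} (hy : y ∈ domain N) :
    ∃ E ∈ T.entities, y ∈ toSet E := by
  rw [← T.union_eq] at hy
  simpa using hy

lemma TMesh.mem_domain_of_mem (T : TMesh d N) {E : Box d} (hE : E ∈ T.entities)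
    {y : Fin d → ℝ} (hy : y ∈ toSet E) : y ∈ domain N := by
  rw [← T.union_eq]
  exact mem_biUnion hE hy

lemma TMesh.comp_cases (T : TMesh d N) {E : Box d} (hE : E ∈ T.entities) (l : Fin d) :
    (∃ q : ℕ, q ≤ N l ∧ E l = {(q : ℝ)}) ∨
      ∃ a b : ℕ, a < b ∧ b ≤ N l ∧ E l = Ioo (a : ℝ) (b : ℝ) :=
  T.mem_entity E hE l

lemma TMesh.interval_of_nonint (T : TMesh d N) {E : Box d} (hE : E ∈ T.entities) {l : Fin d}
    {y : ℝ} (hy : y ∈ E l) (hy' : ∀ q : ℕ, y ≠ q) :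
    ∃ a b : ℕ, a < b ∧ b ≤ N l ∧ E l = Ioo (a : ℝ) (b : ℝ) := by
  rcases T.comp_cases hE l with ⟨q, -, h⟩ | h
  · rw [h] at hy
    exact absurd hy (hy' q)
  · exact h

end Entities

lemma half_ne_nat (m : ℕ) {σ : ℝ} (hσ : σ = 1 / 2 ∨ σ = -1 / 2) (q : ℕ) : (m : ℝ) + σ ≠ q := by
  rintro h
  rcases hσ with rfl | rfl
  · have h1 : (2 * m + 1 : ℝ) = 2 * q := by linarith
    have h2 : 2 * m + 1 = 2 * q := by exact_mod_cast h1
    omega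
  · have h1 : (2 * m : ℝ) = 2 * q + 1 := by linarith
    have h2 : 2 * m = 2 * q + 1 := by exact_mod_cast h1
    omega

/-- An open integer interval containing a point at distance `1/2` of the integer `m` contains
`m` in its closure. -/
lemma mem_Icc_of_half {a b m : ℕ} {σ : ℝ} (hσ : σ = 1 / 2 ∨ σ = -1 / 2)
    (h : (m : ℝ) + σ ∈ Ioo (a : ℝ) b) : (m : ℝ) ∈ Icc (a : ℝ) b := by
  have h1 : a < m + 1 := by
    have : (a : ℝ) < m + 1 := by rcases hσ with rfl | rfl <;> linarith [h.1]
    exact_mod_cast this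
  have h2 : m < b + 1 := by
    have : (m : ℝ) < b + 1 := by rcases hσ with rfl | rfl <;> linarith [h.2]
    exact_mod_cast this
  exact ⟨by exact_mod_cast Nat.lt_succ_iff.1 h1, by exact_mod_cast Nat.lt_succ_iff.1 h2⟩

lemma half_mem_of_lt {a b m : ℕ} (h1 : a ≤ m) (h2 : m < b) :
    (m : ℝ) + 1 / 2 ∈ Ioo (a : ℝ) b := by
  have h1' : (a : ℝ) ≤ m := by exact_mod_cast h1
  have h2' : (m : ℝ) + 1 ≤ b := by exact_mod_cast h2
  constructor <;> linarith

lemma half_mem_of_gt {a b m : ℕ} (h1 : a < m) (h2 : m ≤ b) :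
    (m : ℝ) + -1 / 2 ∈ Ioo (a : ℝ) b := by
  have h1' : (a : ℝ) + 1 ≤ m := by exact_mod_cast h1
  have h2' : (m : ℝ) ≤ b := by exact_mod_cast h2
  constructor <;> linarith

lemma Icc_cases {a b m : ℕ} (hab : a < b) (h : (m : ℝ) ∈ Icc (a : ℝ) b) :
    (m : ℝ) ∈ Ioo (a : ℝ) b ∨ (m = a ∧ (m : ℝ) + 1 / 2 ∈ Ioo (a : ℝ) b) ∨
      (m = b ∧ (m : ℝ) + -1 / 2 ∈ Ioo (a : ℝ) b) := by
  have h1 : a ≤ m := by exact_mod_cast h.1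
  have h2 : m ≤ b := by exact_mod_cast h.2
  rcases h1.eq_or_lt with h3 | h3
  · exact .inr (.inl ⟨h3.symm, half_mem_of_lt h1 (by omega)⟩)
  · rcases h2.eq_or_lt with h4 | h4
    · exact .inr (.inr ⟨h4, half_mem_of_gt (by omega) h2⟩)
    · exact .inl ⟨by exact_mod_cast h3, by exact_mod_cast h4⟩

/-! ### A T-junction between a face and a cell -/

lemma mem_of_subset_closure {a b c e : ℕ} (hce : c < e) {y : ℝ} (hy : y ∈ Ioo (a : ℝ) b)
    (h : Ioo (a : ℝ) b ⊆ closure (Ioo (c : ℝ) e)) : y ∈ Ioo (c : ℝ) e := by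
  rw [closure_Ioo_nat hce] at h
  have := interior_maximal h isOpen_Ioo hy
  rwa [interior_Icc] at this

/-- The local picture: the point `h` lies in the slice `S_i(n)` and has `h k = m`; across the
hyperplane `x_k = m` an `i`-orthogonal hyperface `F` faces a cell `Q` with `n ∈ Q_i`. Then the
entity through `h` is a T-junction with associated cell `Q`. -/
lemma tjunction_of_adjacent {d : ℕ} {N : Fin d → ℕ} (T : TMesh d N) {i k : Fin d} (hik : i ≠ k)
    {n m : ℕ} {σ : ℝ} (hσ : σ = 1 / 2 ∨ σ = -1 / 2) {h : Fin d → ℝ} (hi : h i = n) (hk : h k = m)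
    (hgen : ∀ l, l ≠ i → l ≠ k → ∀ q : ℕ, h l ≠ q) {F Q : Box d} (hF : F ∈ T.entities)
    (hFi : F i = {(n : ℝ)}) (hFm : Function.update h k ((m : ℝ) + -σ) ∈ toSet F)
    (hQ : Q ∈ T.entities) (hQi : Q i ≠ {(n : ℝ)})
    (hQm : Function.update h k ((m : ℝ) + σ) ∈ toSet Q) :
    ∃ J ∈ T.entities, h ∈ toSet J ∧ IsTJunction T J ∧ TJData T J Q i k := by
  have hσ' : -σ = 1 / 2 ∨ -σ = -1 / 2 := by
    rcases hσ with rfl | rfl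
    · right; norm_num
    · left; norm_num
  have hFm' := mem_toSet.1 hFm
  have hQm' := mem_toSet.1 hQm
  have hFl : ∀ l, l ≠ k → h l ∈ F l := fun l hl => by
    simpa [Function.update_of_ne hl] using hFm' l
  have hQl : ∀ l, l ≠ k → h l ∈ Q l := fun l hl => by
    simpa [Function.update_of_ne hl] using hQm' l
  have hFk : (m : ℝ) + -σ ∈ F k := by simpa using hFm' k
  have hQk : (m : ℝ) + σ ∈ Q k := by simpa using hQm' k
  obtain ⟨fa, fb, hfab, hfN, hFkI⟩ := T.interval_of_nonint hF hFk (half_ne_nat m hσ')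
  obtain ⟨qa, qb, hqab, hqN, hQkI⟩ := T.interval_of_nonint hQ hQk (half_ne_nat m hσ)
  have hni : (n : ℝ) ∈ Q i := hi ▸ hQl i hik
  obtain ⟨ua, ub, huab, huN, hQiI⟩ : ∃ a b : ℕ, a < b ∧ b ≤ N i ∧ Q i = Ioo (a : ℝ) b := by
    rcases T.comp_cases hQ i with ⟨q, -, hq⟩ | hq
    · rw [hq] at hni hQi
      rw [mem_singleton_iff] at hni
      exact absurd (by rw [hni]) hQi
    · exact hq
  have hnu := hQiI ▸ hni
  have hn1 : ua < n := by exact_mod_cast hnu.1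
  have hn2 : n < ub := by exact_mod_cast hnu.2
  have hmq : (m : ℝ) ∈ closure (Q k) := by
    rw [hQkI, closure_Ioo_nat hqab]
    exact mem_Icc_of_half hσ (hQkI ▸ hQk)
  have hmf : (m : ℝ) ∈ closure (F k) := by
    rw [hFkI, closure_Ioo_nat hfab]
    exact mem_Icc_of_half hσ' (hFkI ▸ hFk)
  have hclF : ∀ l, h l ∈ closure (F l) := fun l => by
    by_cases hl : l = k
    · subst hl; rw [hk]; exact hmf
    · exact subset_closure (hFl l hl)
  have hclQ : ∀ l, h l ∈ closure (Q l) := fun l => by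
    by_cases hl : l = k
    · subst hl; rw [hk]; exact hmq
    · exact subset_closure (hQl l hl)
  have hcdom := mem_domain.1 (T.mem_domain_of_mem hF hFm)
  have hdomQ := mem_domain.1 (T.mem_domain_of_mem hQ hQm)
  -- The integer `m` lies strictly between the points `m ± 1/2` of `[0, N k]`.
  have hm0 : 0 < (m : ℝ) ∧ (m : ℝ) < N k := by
    have h1 := hcdom k
    have h2 := hdomQ k
    rw [Function.update_self] at h1 h2
    rcases hσ with rfl | rfl <;> constructor <;> linarith
  have hdom : h ∈ domain N := mem_domain.2 fun l => by
    by_cases hl : l = k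
    · subst hl; rw [hk]; exact ⟨hm0.1.le, hm0.2.le⟩
    · simpa [Function.update_of_ne hl] using hcdom l
  obtain ⟨J, hJ, hhJ⟩ := T.exists_entity hdom
  have hhJ' := mem_toSet.1 hhJ
  have hJF := T.frontier_condition hJ hF hhJ hclF
  have hJQ := T.frontier_condition hJ hQ hhJ hclQ
  have hJi : J i = {(n : ℝ)} := by
    have h1 := hJF i
    rw [hFi, closure_singleton] at h1
    exact h1.antisymm (singleton_subset_iff.2 (hi ▸ hhJ' i))
  -- `m` is an endpoint of `Q k`: otherwise `Q` would also contain the point of `F`.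
  have hmQ : (m : ℝ) ∉ Q k := by
    intro hmem
    have : Function.update h k ((m : ℝ) + -σ) ∈ toSet Q := by
      refine mem_toSet.2 fun l => ?_
      by_cases hl : l = k
      · subst hl
        rw [Function.update_self, hQkI]
        rw [hQkI] at hmem
        have h1 : qa < m := by exact_mod_cast hmem.1
        have h2 : m < qb := by exact_mod_cast hmem.2
        rcases hσ' with h3 | h3 <;> rw [h3]
        · exact half_mem_of_lt h1.le h2
        · exact half_mem_of_gt h1 h2.le
      · rw [Function.update_of_ne hl]
        exact hQl l hl
    have := T.eq_of_mem hF hQ hFm this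
    exact hQi (this ▸ hFi)
  have hJk : J k = {(m : ℝ)} := by
    have hmJ : (m : ℝ) ∈ J k := hk ▸ hhJ' k
    rcases T.comp_cases hJ k with ⟨q, -, hq⟩ | ⟨a, b, hab, -, hq⟩
    · rw [hq] at hmJ ⊢
      rw [mem_singleton_iff.1 hmJ]
    · exfalso
      have h1 := hJQ k
      rw [hq] at hmJ
      rw [hq, hQkI] at h1
      exact hmQ (hQkI ▸ mem_of_subset_closure hqab hmJ h1)
  have hJl : ∀ l, l ≠ i → l ≠ k → ∃ a b : ℕ, a < b ∧ b ≤ N l ∧ J l = Ioo (a : ℝ) b :=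
    fun l h1 h2 => T.interval_of_nonint hJ (hhJ' l) (hgen l h1 h2)
  have hd : 2 ≤ d := by
    have := i.isLt; have := k.isLt; have : (i : ℕ) ≠ k := fun h => hik (Fin.ext h)
    omega
  have hsingJ : singDirs J = {i, k} := by
    ext l
    simp only [singDirs, mem_ofPred_eq, mem_insert_iff, mem_singleton_iff]
    constructor
    · rintro ⟨r, hr⟩
      by_contra hl
      push Not at hl
      obtain ⟨a, b, hab, -, hq⟩ := hJl l hl.1 hl.2
      exact Ioo_nat_ne_singleton hab r (hq.symm.trans hr)
    · rintro (rfl | rfl)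
      · exact ⟨_, hJi⟩
      · exact ⟨_, hJk⟩
  have hJcard : (singDirs J).ncard = 2 := by rw [hsingJ, ncard_pair hik]
  have hQall : ∀ l, ∃ a b : ℕ, a < b ∧ b ≤ N l ∧ Q l = Ioo (a : ℝ) b := fun l => by
    by_cases h1 : l = i
    · subst h1; exact ⟨ua, ub, huab, huN, hQiI⟩
    by_cases h2 : l = k
    · subst h2; exact ⟨qa, qb, hqab, hqN, hQkI⟩
    exact T.interval_of_nonint hQ (hQl l h2) (hgen l h1 h2)
  have hQopen : IsOpen (toSet Q) := by
    refine isOpen_set_pi finite_univ fun l _ => ?_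
    obtain ⟨a, b, -, -, hq⟩ := hQall l
    rw [hq]; exact isOpen_Ioo
  have hQsing : singDirs Q = ∅ := by
    refine eq_empty_of_forall_notMem fun l ⟨r, hr⟩ => ?_
    obtain ⟨a, b, hab, -, hq⟩ := hQall l
    exact Ioo_nat_ne_singleton hab r (hq.symm.trans hr)
  refine ⟨J, hJ, hhJ, ⟨⟨hJ, ?_⟩, ?_, ?_⟩, ⟨hQ, ?_⟩, ?_, ?_, hik, ⟨_, hJi⟩, ⟨_, hJk⟩, ?_, ?_, ?_⟩
  · rw [hJcard]; omega
  · -- `h` is an interior point of the domain.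
    intro hsub
    have h1 := hsub hhJ
    refine h1.2 ?_
    rw [domain, interior_pi_set finite_univ]
    refine mem_univ_pi.2 fun l => ?_
    rw [interior_Icc]
    by_cases h1 : l = i
    · subst h1
      rw [hi]
      exact ⟨by exact_mod_cast (by omega : 0 < n), by exact_mod_cast (by omega : n < N l)⟩
    by_cases h2 : l = k
    · subst h2; rw [hk]; exact hm0
    have h3 := mem_domain.1 hdom l
    refine ⟨h3.1.lt_of_ne fun h4 => hgen l h1 h2 0 (by simpa using h4.symm),
      h3.2.lt_of_ne (hgen l h1 h2 _)⟩
  · -- Only `F` and the two faces above and below `h` in direction `i` can contain `J`.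
    have hdir : ∀ τ : ℝ, (τ = 1 / 2 ∨ τ = -1 / 2) →
        ∃ E ∈ T.entities, Function.update h i ((n : ℝ) + τ) ∈ toSet E := by
      intro τ hτ
      refine T.exists_entity (mem_domain.2 fun l => ?_)
      by_cases hl : l = i
      · subst hl
        rw [Function.update_self]
        have h1 : (0 : ℝ) + 1 ≤ n := by exact_mod_cast (by omega : 0 + 1 ≤ n)
        have h2 : (n : ℝ) + 1 ≤ N l := by exact_mod_cast (by omega : n + 1 ≤ N l)
        rcases hτ with rfl | rfl <;> constructor <;> linarith
      · rw [Function.update_of_ne hl]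
        exact mem_domain.1 hdom l
    obtain ⟨E₁, hE₁, hE₁m⟩ := hdir (1 / 2) (.inl rfl)
    obtain ⟨E₂, hE₂, hE₂m⟩ := hdir (-1 / 2) (.inr rfl)
    have hsub : {G ∈ Hdim T (d - 1) | toSet J ⊆ frontier (toSet G)} ⊆ {F, E₁, E₂} := by
      rintro G ⟨⟨hG, hGcard⟩, hGfr⟩
      have hGcard : (singDirs G).ncard = 1 := by rw [hGcard]; omega
      have hclG := mem_closure_toSet.1 (frontier_subset_closure (hGfr hhJ))
      have hJG := T.frontier_condition hJ hG hhJ hclG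
      have hhG : h ∉ toSet G := by
        intro hmem
        have := T.eq_of_mem hJ hG hhJ hmem
        rw [← this, hJcard] at hGcard
        omega
      have hGl : ∀ l, l ≠ i → l ≠ k → (∀ r, G l ≠ {r}) ∧ h l ∈ G l := by
        intro l h1 h2
        obtain ⟨a, b, hab, -, hq⟩ := hJl l h1 h2
        have h3 := hJG l
        have h4 := hhJ' l
        rw [hq] at h3 h4
        rcases T.comp_cases hG l with ⟨r, -, hr⟩ | ⟨c, e, hce, -, hr⟩
        · rw [hr, closure_singleton] at h3
          exact absurd (finite_singleton _ |>.subset h3)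
            (Ioo_infinite (by exact_mod_cast hab))
        · rw [hr] at h3 ⊢
          exact ⟨Ioo_nat_ne_singleton hce, mem_of_subset_closure hce h4 h3⟩
      have hupd : ∀ (l₀ : Fin d) (v : ℝ), v ∈ G l₀ → (∀ l, l ≠ l₀ → h l ∈ G l) →
          Function.update h l₀ v ∈ toSet G := by
        intro l₀ v hv hall
        refine mem_toSet.2 fun l => ?_
        by_cases hl : l = l₀
        · subst hl; rwa [Function.update_self]
        · rw [Function.update_of_ne hl]; exact hall l hl
      have hGi := hclG i
      have hGk := hclG k
      rw [hi] at hGi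
      rw [hk] at hGk
      rcases T.comp_cases hG i with ⟨r, -, hr⟩ | ⟨c, e, hce, -, hr⟩
      · rw [hr, closure_singleton, mem_singleton_iff] at hGi
        have hGin : h i ∈ G i := by rw [hr, hi, hGi]; rfl
        rcases T.comp_cases hG k with ⟨r', -, hr'⟩ | ⟨c, e, hce, -, hr'⟩
        · exfalso
          have h1 : ({i, k} : Set (Fin d)) ⊆ singDirs G := by
            rintro l (rfl | rfl)
            · exact ⟨_, hr⟩
            · exact ⟨_, hr'⟩
          have h2 := ncard_le_ncard h1 (toFinite _)
          rw [ncard_pair hik, hGcard] at h2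
          omega
        · have hother : ∀ l, l ≠ k → h l ∈ G l := fun l hl => by
            by_cases h1 : l = i
            · subst h1; exact hGin
            · exact (hGl l h1 hl).2
          rw [hr', closure_Ioo_nat hce] at hGk
          have hcl : (m : ℝ) + σ ∈ G k ∨ (m : ℝ) + -σ ∈ G k := by
            rw [hr']
            rcases Icc_cases hce hGk with h1 | ⟨-, h1⟩ | ⟨-, h1⟩
            · refine absurd (mem_toSet.2 fun l => ?_) hhG
              by_cases hl : l = k
              · subst hl; rw [hk, hr']; exact h1
              · exact hother l hl
            · rcases hσ with rfl | rfl
              · exact .inl h1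
              · right; convert h1 using 2; norm_num
            · rcases hσ with rfl | rfl
              · right; convert h1 using 2; norm_num
              · exact .inl h1
          rcases hcl with h1 | h1
          · have := T.eq_of_mem hG hQ (hupd k _ h1 hother) hQm
            exact absurd (by rw [← this, hr, hGi]) hQi
          · exact .inl (T.eq_of_mem hG hF (hupd k _ h1 hother) hFm)
      · rcases T.comp_cases hG k with ⟨r', -, hr'⟩ | ⟨c', e', hce', -, hr'⟩
        · rw [hr', closure_singleton, mem_singleton_iff] at hGk
          have hGkm : h k ∈ G k := by rw [hr', hk, hGk]; rfl
          have hother : ∀ l, l ≠ i → h l ∈ G l := fun l hl => by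
            by_cases h1 : l = k
            · subst h1; exact hGkm
            · exact (hGl l hl h1).2
          rw [hr, closure_Ioo_nat hce] at hGi
          rcases Icc_cases hce hGi with h1 | ⟨-, h1⟩ | ⟨-, h1⟩
          · refine absurd (mem_toSet.2 fun l => ?_) hhG
            by_cases hl : l = i
            · subst hl; rw [hi, hr]; exact h1
            · exact hother l hl
          · exact .inr (.inl (T.eq_of_mem hG hE₁ (hupd i _ (hr ▸ h1) hother) hE₁m))
          · exact .inr (.inr (T.eq_of_mem hG hE₂ (hupd i _ (hr ▸ h1) hother) hE₂m))
        · exfalso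
          have h1 : singDirs G = ∅ := by
            refine eq_empty_of_forall_notMem fun l ⟨r, hlr⟩ => ?_
            by_cases h1 : l = i
            · subst h1; exact Ioo_nat_ne_singleton hce r (hr.symm.trans hlr)
            by_cases h2 : l = k
            · subst h2; exact Ioo_nat_ne_singleton hce' r (hr'.symm.trans hlr)
            exact (hGl l h1 h2).1 r hlr
          rw [h1, ncard_empty] at hGcard
          omega
    have h1 := ncard_le_ncard hsub (toFinite _)
    have h2 := ncard_insert_le F {E₁, E₂}
    have h3 := ncard_insert_le E₁ {E₂}
    rw [ncard_singleton] at h3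
    rw [valence]
    omega
  · rw [hQsing, ncard_empty]; omega
  · intro y hy
    rw [frontier, hQopen.interior_eq]
    refine ⟨mem_closure_toSet.2 fun l => hJQ l (mem_toSet.1 hy l), fun hyQ => ?_⟩
    have := T.eq_of_mem hJ hQ hy hyQ
    rw [this, hQsing, ncard_empty] at hJcard
    omega
  · refine eq_empty_of_forall_notMem fun y ⟨hy1, hy2⟩ => ?_
    have h1 := mem_closure_toSet.1 hy1 i
    rw [hJi, closure_singleton, mem_singleton_iff] at h1
    have h2 := hy2 i (mem_univ i)
    simp only [h1, hQiI, frontier, isOpen_Ioo.interior_eq] at h2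
    exact h2.2 hnu
  · rw [hJi]; exact singleton_subset_iff.2 hni
  · rw [hJi]; exact fun h1 => hQi h1.symm
  · rw [hJk, singleton_subset_iff]
    refine ⟨hmq, fun h1 => hmQ (interior_subset h1)⟩

end TSpline

namespace TSpline

/-! ### Crossing the boundary of the skeleton along a segment -/

section Crossing

variable {d : ℕ} {N : Fin d → ℕ}

lemma isClosed_skel (T : TMesh d N) (i : Fin d) : IsClosed (skel T i) := by
  refine Set.Finite.isClosed_biUnion (T.finite.subset ?_) fun F _ => isClosed_closure
  exact fun F hF => hF.1.1

/-- An entity whose only singleton component is the `i`-th has its closure in `Sk_i`. -/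
lemma closure_subset_skel (T : TMesh d N) {i : Fin d} {n : ℕ} {E : Box d} (hE : E ∈ T.entities)
    (hEi : E i = {(n : ℝ)}) (h : ∀ l, l ≠ i → ∀ r, E l ≠ {r}) :
    closure (toSet E) ⊆ skel T i := by
  have hsing : singDirs E = {i} := by
    ext l
    simp only [singDirs, mem_ofPred_eq, mem_singleton_iff]
    constructor
    · rintro ⟨r, hr⟩
      by_contra hl
      exact h l hl r hr
    · rintro rfl
      exact ⟨_, hEi⟩
  refine subset_biUnion_of_mem (u := fun F : Box d => closure (toSet F)) ?_
  refine ⟨⟨hE, ?_⟩, _, hEi⟩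
  have := i.isLt
  rw [hsing, ncard_singleton]
  omega

lemma exists_face_of_mem_skel (T : TMesh d N) {i : Fin d} {n : ℕ} {z : Fin d → ℝ}
    (hz : z ∈ skel T i) (hzi : z i = n) :
    ∃ F ∈ T.entities, F i = {(n : ℝ)} ∧ (∀ l, z l ∈ closure (F l)) ∧
      ∀ l, l ≠ i → ∃ a b : ℕ, a < b ∧ b ≤ N l ∧ F l = Ioo (a : ℝ) b := by
  simp only [skel, mem_iUnion, exists_prop] at hz
  obtain ⟨F, ⟨⟨hF, hcard⟩, r, hr⟩, hzF⟩ := hz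
  rw [mem_closure_toSet] at hzF
  have h1 := hzF i
  rw [hr, closure_singleton, mem_singleton_iff, hzi] at h1
  refine ⟨F, hF, by rw [hr, h1], hzF, fun l hl => ?_⟩
  rcases T.comp_cases hF l with ⟨q, -, hq⟩ | h
  · exfalso
    have h2 : ({i, l} : Set (Fin d)) ⊆ singDirs F := by
      rintro j (rfl | rfl)
      · exact ⟨_, hr⟩
      · exact ⟨_, hq⟩
    have h3 := ncard_le_ncard h2 (toFinite _)
    rw [ncard_pair hl.symm, hcard] at h3
    have := i.isLt
    omega
  · exact h

/-- `Near z i n l y`: `y` is an admissible `l`-th coordinate of a generic point of the slice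
`S_i(n)` next to `z`. That is, `y` is not an integer, and equals `z l`, or is at distance `1/2`
of `z l` if that is an integer; for `l = i` it is `n`. -/
def Near (z : Fin d → ℝ) (i : Fin d) (n : ℕ) (l : Fin d) (y : ℝ) : Prop :=
  (l = i ∧ y = n) ∨ (l ≠ i ∧ (∀ q : ℕ, y ≠ q) ∧
    (y = z l ∨ ∃ m : ℕ, ∃ σ : ℝ, (σ = 1 / 2 ∨ σ = -1 / 2) ∧ z l = m ∧ y = m + σ))

/-- A generic point next to `z` inside a face whose closure contains `z`, one coordinate at a
time. -/
lemma exists_near_mem {z : Fin d → ℝ} {i l : Fin d} {n a b : ℕ} (hl : l ≠ i) (hab : a < b)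
    (hz : z l ∈ Icc (a : ℝ) b) : ∃ y ∈ Ioo (a : ℝ) b, Near z i n l y := by
  by_cases hint : ∃ m : ℕ, z l = m
  · obtain ⟨m, hm⟩ := hint
    rw [hm] at hz
    have h1 : a ≤ m := by exact_mod_cast hz.1
    have h2 : m ≤ b := by exact_mod_cast hz.2
    rcases h2.eq_or_lt with h3 | h3
    · exact ⟨_, half_mem_of_gt (by omega) h2, .inr ⟨hl, half_ne_nat m (.inr rfl),
        .inr ⟨m, _, .inr rfl, hm, rfl⟩⟩⟩
    · exact ⟨_, half_mem_of_lt h1 h3, .inr ⟨hl, half_ne_nat m (.inl rfl),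
        .inr ⟨m, _, .inl rfl, hm, rfl⟩⟩⟩
  · push Not at hint
    exact ⟨z l, ⟨hz.1.lt_of_ne (hint a).symm, hz.2.lt_of_ne (hint b)⟩,
      .inr ⟨hl, hint, .inl rfl⟩⟩

/-- Moving a generic coordinate `c₀` next to `z l` to the side of `u l`, where
`z l = u l + t₀ (w l - u l)`. The result `y` is `c₀` or its mirror image, and a closed integer
interval around `y` contains the `l`-th coordinates of the points just before `z` on the segment
from `u` to `w`. -/
lemma exists_near_toward {z u w : Fin d → ℝ} {i l : Fin d} {n : ℕ} {t₀ : ℝ} (ht₀ : 0 < t₀)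
    (hz : z l = u l + t₀ * (w l - u l)) (hu : 0 ≤ u l ∧ u l ≤ N l) {c₀ : ℝ}
    (hc₀ : Near z i n l c₀) (hc₀N : 0 ≤ c₀ ∧ c₀ ≤ N l) :
    ∃ y : ℝ, Near z i n l y ∧ (0 ≤ y ∧ y ≤ N l) ∧
      (y = c₀ ∨ (l ≠ i ∧ ∃ m : ℕ, ∃ σ : ℝ, (σ = 1 / 2 ∨ σ = -1 / 2) ∧ z l = m ∧ y = m + σ ∧
        c₀ = m + -σ ∧ 0 < σ * (u l - w l))) ∧
      (l ≠ i → ∀ a b : ℕ, y ∈ Ioo (a : ℝ) b →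
        ∀ᶠ t in nhdsWithin t₀ (Iio t₀), u l + t * (w l - u l) ∈ Icc (a : ℝ) b) := by
  have hcont : Filter.Tendsto (fun t : ℝ => u l + t * (w l - u l)) (nhdsWithin t₀ (Iio t₀))
      (nhds (z l)) := by
    rw [hz]
    exact (Continuous.tendsto (by fun_prop) t₀).mono_left nhdsWithin_le_nhds
  rcases hc₀ with ⟨rfl, hy⟩ | ⟨hl, hni, hy | ⟨m, σ₀, hσ₀, hzm, hy⟩⟩
  · exact ⟨c₀, .inl ⟨rfl, hy⟩, hc₀N, .inl rfl, fun h => absurd rfl h⟩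
  · refine ⟨c₀, .inr ⟨hl, hni, .inl hy⟩, hc₀N, .inl rfl, fun _ a b hab => ?_⟩
    rw [hy] at hab
    exact (hcont.eventually (isOpen_Ioo.mem_nhds hab)).mono fun t ht => ⟨ht.1.le, ht.2.le⟩
  · have hc₀near : Near z i n l c₀ := .inr ⟨hl, hni, .inr ⟨m, σ₀, hσ₀, hzm, hy⟩⟩
    rcases lt_trichotomy (u l - w l) 0 with hv | hv | hv
    · -- The segment approaches `z` from below in direction `l`.
      have hm1 : 0 < m := by
        have : (0 : ℝ) < m := by rw [← hzm, hz]; nlinarith [hu.1]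
        exact_mod_cast this
      have hm1' : (0 : ℝ) + 1 ≤ m := by exact_mod_cast hm1
      have hmN : (m : ℝ) + -1 / 2 ≤ N l := by
        rcases hσ₀ with h | h <;> rw [hy, h] at hc₀N <;> linarith [hc₀N.2]
      refine ⟨m + -1 / 2, .inr ⟨hl, half_ne_nat m (.inr rfl), .inr ⟨m, _, .inr rfl, hzm, rfl⟩⟩,
        ⟨by linarith, hmN⟩, ?_, fun _ a b hab => ?_⟩
      · rcases hσ₀ with h | h
        · refine .inr ⟨hl, m, -1 / 2, .inr rfl, hzm, rfl, ?_, by linarith⟩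
          rw [hy, h]; norm_num
        · exact .inl (by rw [hy, h])
      · have hmb := (mem_Icc_of_half (.inr rfl) hab).2
        have ham : (a : ℝ) < z l := by rw [hzm]; linarith [hab.1]
        filter_upwards [hcont.eventually (lt_mem_nhds ham), self_mem_nhdsWithin] with t ht1 ht2
        refine ⟨ht1.le, le_trans ?_ (hzm ▸ hmb)⟩
        rw [hz]
        nlinarith [mem_Iio.1 ht2]
    · refine ⟨c₀, hc₀near, hc₀N, .inl rfl, fun _ a b hab => ?_⟩
      rw [hy] at hab
      have h1 := mem_Icc_of_half hσ₀ hab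
      have h2 : w l - u l = 0 := by linarith
      rw [← hzm, hz] at h1
      simp only [h2, mul_zero] at h1 ⊢
      exact Filter.Eventually.of_forall fun _ => h1
    · have hm1 : m < N l := by
        have : (m : ℝ) < N l := by rw [← hzm, hz]; nlinarith [hu.2]
        exact_mod_cast this
      have hm1' : (m : ℝ) + 1 ≤ N l := by exact_mod_cast hm1
      have hm0 : (0 : ℝ) ≤ m := Nat.cast_nonneg m
      refine ⟨m + 1 / 2, .inr ⟨hl, half_ne_nat m (.inl rfl), .inr ⟨m, _, .inl rfl, hzm, rfl⟩⟩,
        ⟨by linarith, by linarith⟩, ?_, fun _ a b hab => ?_⟩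
      · rcases hσ₀ with h | h
        · exact .inl (by rw [hy, h])
        · refine .inr ⟨hl, m, 1 / 2, .inl rfl, hzm, rfl, ?_, by linarith⟩
          rw [hy, h]; norm_num
      · have ham := (mem_Icc_of_half (.inl rfl) hab).1
        have hmb : z l < (b : ℝ) := by rw [hzm]; linarith [hab.2]
        filter_upwards [hcont.eventually (gt_mem_nhds hmb), self_mem_nhdsWithin] with t ht1 ht2
        refine ⟨le_trans (hzm ▸ ham) ?_, ht1.le⟩
        rw [hz]
        nlinarith [mem_Iio.1 ht2]

/-- On a segment in the slice `S_i(n)` from a point `u` off the skeleton to a point `w` of the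
skeleton, the first point `z` in the skeleton lies in the closure of a T-junction, whose
associated cell points back towards `u`. -/
lemma exists_tjunction_on_segment (T : TMesh d N) {i : Fin d} {n : ℕ} {u w : Fin d → ℝ}
    (hu : u ∈ slice N i n) (hw : w ∈ slice N i n) (huS : u ∉ skel T i) (hwS : w ∈ skel T i) :
    ∃ J Q : Box d, ∃ k : Fin d, IsTJunction T J ∧ TJData T J Q i k ∧
      (∃ z ∈ segment ℝ u w, z ∈ closure (toSet J)) ∧
      (∃ y ∈ Q k, y ∈ segment ℝ (u k) (w k)) ∧ u k ≠ w k := by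
  have hudom := mem_domain.1 hu.1
  -- The first parameter `t₀` at which the segment meets the skeleton.
  let g : ℝ → Fin d → ℝ := fun t l => u l + t * (w l - u l)
  have hg : Continuous g := by fun_prop
  have hcomp : IsCompact (Icc (0 : ℝ) 1 ∩ g ⁻¹' skel T i) :=
    isCompact_Icc.inter_right ((isClosed_skel T i).preimage hg)
  have hg1 : g 1 = w := by ext l; simp [g]
  have hg0 : g 0 = u := by ext l; simp [g]
  obtain ⟨t₀, ⟨⟨ht0, ht1⟩, htS⟩, hleast⟩ := hcomp.exists_isLeast
    ⟨1, ⟨zero_le_one, le_rfl⟩, by rw [mem_preimage, hg1]; exact hwS⟩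
  have ht0 : 0 < t₀ := by
    refine ht0.lt_of_ne ?_
    rintro rfl
    rw [mem_preimage, hg0] at htS
    exact huS htS
  set z := g t₀ with hzdef
  have hz : ∀ l, z l = u l + t₀ * (w l - u l) := fun l => rfl
  have hzS : z ∈ skel T i := htS
  have hgi : ∀ t, g t i = n := fun t => by simp [g, hu.2, hw.2]
  obtain ⟨F, hF, hFi, hzF, hFint⟩ := exists_face_of_mem_skel T hzS (hgi t₀)
  -- A generic point `c₀` of `F` next to `z`, and `c₁` next to `z` on the side of `u`.
  have hc₀ : ∀ l, ∃ y ∈ F l, Near z i n l y := fun l => by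
    by_cases hl : l = i
    · subst hl
      exact ⟨n, by rw [hFi]; rfl, .inl ⟨rfl, rfl⟩⟩
    · obtain ⟨a, b, hab, -, hFl⟩ := hFint l hl
      have h1 := hzF l
      rw [hFl, closure_Ioo_nat hab] at h1
      rw [hFl]
      exact exists_near_mem hl hab h1
  choose c₀ hc₀F hc₀near using hc₀
  have hc₀dom := mem_domain.1 (T.mem_domain_of_mem hF (mem_toSet.2 hc₀F))
  have hc₁ := fun l => exists_near_toward (N := N) ht0 (hz l) (hudom l) (hc₀near l) (hc₀dom l)
  choose c₁ hc₁near hc₁dom hc₁rel hc₁ev using hc₁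
  let P : Finset (Fin d) → Fin d → ℝ := fun B l => if l ∈ B then c₁ l else c₀ l
  have hPnear : ∀ B l, Near z i n l (P B l) := fun B l => by
    by_cases hl : l ∈ B
    · simpa [P, hl] using hc₁near l
    · simpa [P, hl] using hc₀near l
  have hPdom : ∀ B, P B ∈ domain N := fun B => mem_domain.2 fun l => by
    by_cases hl : l ∈ B
    · simpa [P, hl] using hc₁dom l
    · simpa [P, hl] using hc₀dom l
  let marked : Finset (Fin d) → Prop :=
    fun B => ∃ E ∈ T.entities, P B ∈ toSet E ∧ E i = {(n : ℝ)}
  have hmark0 : marked ∅ := ⟨F, hF, mem_toSet.2 fun l => by simpa [P] using hc₀F l, hFi⟩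
  -- A face through `c₁` would contain points of the segment before `z`.
  have hmark1 : ¬ marked Finset.univ := by
    rintro ⟨E, hE, hPE, hEi⟩
    have hPE' : ∀ l, c₁ l ∈ E l := fun l => by simpa [P] using mem_toSet.1 hPE l
    have hEint : ∀ l, l ≠ i → ∃ a b : ℕ, a < b ∧ b ≤ N l ∧ E l = Ioo (a : ℝ) b := by
      intro l hl
      rcases hc₁near l with ⟨h1, -⟩ | ⟨-, h1, -⟩
      · exact absurd h1 hl
      · exact T.interval_of_nonint hE (hPE' l) h1
    have hsub := closure_subset_skel T hE hEi fun l hl r => by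
      obtain ⟨a, b, hab, -, hq⟩ := hEint l hl
      rw [hq]
      exact Ioo_nat_ne_singleton hab r
    have hev : ∀ᶠ t in nhdsWithin t₀ (Iio t₀), ∀ l, g t l ∈ closure (E l) := by
      refine Filter.eventually_all.2 fun l => ?_
      by_cases hl : l = i
      · subst hl
        refine Filter.Eventually.of_forall fun t => subset_closure ?_
        rw [hgi, hEi]; rfl
      · obtain ⟨a, b, hab, -, hq⟩ := hEint l hl
        rw [hq, closure_Ioo_nat hab]
        exact hc₁ev l hl a b (hq ▸ hPE' l)
    have hpos : ∀ᶠ t in nhdsWithin t₀ (Iio t₀), 0 < t :=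
      nhdsWithin_le_nhds (lt_mem_nhds ht0)
    obtain ⟨t, ht, htpos, htlt⟩ := (hev.and (hpos.and self_mem_nhdsWithin)).exists
    have htlt : t < t₀ := htlt
    have := hleast ⟨⟨htpos.le, htlt.le.trans ht1⟩, hsub (mem_closure_toSet.2 ht)⟩
    exact absurd this (not_le.2 htlt)
  -- Replacing the coordinates of `c₀` by those of `c₁` one at a time leaves the faces at some `k`.
  obtain ⟨B, k, hkB, hB, hkBm⟩ : ∃ B k, k ∉ B ∧ marked B ∧ ¬ marked (insert k B) := by
    by_contra hcon
    push Not at hcon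
    refine hmark1 ?_
    induction (Finset.univ : Finset (Fin d)) using Finset.induction_on with
    | empty => exact hmark0
    | insert k B hk ih => exact hcon B k hk ih
  have hPk : P (insert k B) = Function.update (P B) k (c₁ k) := by
    ext l
    by_cases hl : l = k
    · subst hl; simp [P]
    · simp [P, hl]
  have hPBk : P B k = c₀ k := by simp [P, hkB]
  rcases hc₁rel k with hsame | ⟨hki, m, σ, hσ, hzm, hc₁k, hc₀k, hσv⟩
  · rw [hsame, ← hPBk, Function.update_eq_self] at hPk
    refine absurd ?_ hkBm
    simp only [marked, hPk]
    exact hB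
  obtain ⟨F', hF', hPF', hF'i⟩ := hB
  obtain ⟨Q, hQ, hPQ⟩ := T.exists_entity (hPdom (insert k B))
  have hQi : Q i ≠ {(n : ℝ)} := fun h => hkBm ⟨Q, hQ, hPQ, h⟩
  have hPi : P B i = n := by
    rcases hPnear B i with ⟨-, h⟩ | ⟨h, -⟩
    · exact h
    · exact absurd rfl h
  obtain ⟨J, hJ, hhJ, hTJ, hdata⟩ := tjunction_of_adjacent T (i := i) (k := k) hki.symm hσ
    (h := Function.update (P B) k m) (n := n) (m := m)
    (by rw [Function.update_of_ne hki.symm, hPi]) (by rw [Function.update_self])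
    (fun l h1 h2 => by
      rw [Function.update_of_ne h2]
      rcases hPnear B l with ⟨h3, -⟩ | ⟨-, h3, -⟩
      · exact absurd h3 h1
      · exact h3) hF' hF'i
    (by rw [Function.update_idem, ← hc₀k, ← hPBk, Function.update_eq_self]; exact hPF')
    hQ hQi (by rw [Function.update_idem, ← hc₁k, ← hPk]; exact hPQ)
  have hhJ' := mem_toSet.1 hhJ
  refine ⟨J, Q, k, hTJ, hdata, ⟨z, ?_, mem_closure_toSet.2 fun l => ?_⟩, ?_, ?_⟩
  · rw [segment_eq_image']
    exact ⟨t₀, ⟨ht0.le, ht1⟩, by ext l; simp [hz l]⟩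
  · have h1 := hhJ' l
    by_cases hl : l = k
    · subst hl
      rw [Function.update_self, ← hzm] at h1
      exact subset_closure h1
    · rw [Function.update_of_ne hl] at h1
      rcases hPnear B l with ⟨rfl, h2⟩ | ⟨-, h2, h3 | ⟨q, τ, hτ, hzq, h3⟩⟩
      · rw [h2, ← hgi t₀] at h1
        exact subset_closure h1
      · rw [h3] at h1
        exact subset_closure h1
      · obtain ⟨a, b, hab, -, hq⟩ := T.interval_of_nonint hJ h1 h2
        rw [hq, h3] at h1
        rw [hq, closure_Ioo_nat hab, hzq]
        exact mem_Icc_of_half hτ h1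
  · have hQk : (m : ℝ) + σ ∈ Q k := by
      have := mem_toSet.1 hPQ k
      rwa [hPk, Function.update_self, hc₁k] at this
    obtain ⟨a, b, hab, -, hq⟩ := T.interval_of_nonint hQ hQk (half_ne_nat m hσ)
    rw [hq] at hQk ⊢
    have hIcc := mem_Icc_of_half hσ hQk
    have hzk : (m : ℝ) = u k + t₀ * (w k - u k) := by rw [← hzm, hz]
    rw [segment_eq_uIcc]
    rcases hσ with rfl | rfl
    · have hv : 0 < u k - w k := by linarith
      have h1 : (m : ℝ) < u k := by nlinarith
      have h2 : w k ≤ m := by nlinarith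
      refine ⟨min (u k) (m + 1 / 2), ⟨lt_min (hIcc.1.trans_lt h1) hQk.1,
        (min_le_right _ _).trans_lt hQk.2⟩, mem_uIcc.2 (.inr ⟨?_, min_le_left _ _⟩)⟩
      exact le_min (by linarith) (by linarith)
    · have hv : u k - w k < 0 := by linarith
      have h1 : u k < (m : ℝ) := by nlinarith
      have h2 : m ≤ w k := by nlinarith
      refine ⟨max (u k) (m + -1 / 2), ⟨hQk.1.trans_le (le_max_right _ _),
        max_lt (h1.trans_le hIcc.2) hQk.2⟩, mem_uIcc.2 (.inl ⟨le_max_left _ _, ?_⟩)⟩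
      exact max_le (by linarith) (by linarith)
  · intro h
    rw [h, sub_self, mul_zero] at hσv
    exact lt_irrefl _ hσv

lemma toSet_nonempty (T : TMesh d N) {E : Box d} (hE : E ∈ T.entities) : (toSet E).Nonempty := by
  refine univ_pi_nonempty_iff.2 fun l => ?_
  rcases T.comp_cases hE l with ⟨q, -, hq⟩ | ⟨a, b, hab, -, hq⟩
  · rw [hq]; exact singleton_nonempty _
  · rw [hq]; exact nonempty_Ioo.2 (by exact_mod_cast hab)

lemma mem_proj_of_ne {A : Box d} {i k : Fin d} {n : ℕ} {y : Fin d → ℝ}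
    (hy : y ∈ toSet (proj A i n)) (hk : k ≠ i) : y k ∈ A k := by
  simpa [proj, Function.update_of_ne hk] using mem_toSet.1 hy k

lemma proj_subset_slice (T : TMesh d N) {A : Box d} (hA : A ∈ T.entities) {i : Fin d} {n : ℕ}
    (hn : n ≤ N i) : toSet (proj A i n) ⊆ slice N i n := by
  intro y hy
  have hyi : y i = n := by simpa [proj] using mem_toSet.1 hy i
  obtain ⟨a, ha⟩ := toSet_nonempty T hA
  refine ⟨mem_domain.2 fun l => ?_, hyi⟩
  by_cases hl : l = i
  · subst hl
    rw [hyi]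
    exact ⟨Nat.cast_nonneg n, by exact_mod_cast hn⟩
  · have h1 : Function.update a l (y l) ∈ toSet A := mem_toSet.2 fun j => by
      by_cases hj : j = l
      · subst hj; rw [Function.update_self]; exact mem_proj_of_ne hy hl
      · rw [Function.update_of_ne hj]; exact mem_toSet.1 ha j
    simpa using mem_domain.1 (T.mem_domain_of_mem hA h1) l

end Crossing

end TSpline

/-- Every point of a nonempty abstract T-junction extension `ATJ_i(n)`
lies in the support of an anchor `A`, and there is an `i`-orthogonal T-junction,
together with its associated cell, between that point and `P_{i,n}(A)`. -/
theorem TSpline.atj_has_tjunction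
    {d : ℕ} {N p : Fin d → ℕ} (T : TSpline.TMesh d N)
    (hadm : TSpline.Admissible p T)
    (i : Fin d) (n : ℕ) (hn : n ≤ N i)
    (hne : (TSpline.ATJ T p i n).Nonempty)
    (x : Fin d → ℝ) (hx : x ∈ TSpline.ATJ T p i n) :
    ∃ A : TSpline.Box d, TSpline.IsAnchor p T A ∧ x ∈ TSpline.suppA T p A ∧
    ∃ J Q : TSpline.Box d, ∃ k : Fin d,
      TSpline.IsTJunction T J ∧ TSpline.TJData T J Q i k ∧
      (closure (TSpline.toSet J) ∩
        convexHull ℝ (TSpline.toSet (TSpline.proj A i n) ∪ {x})).Nonempty ∧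
      (Q k ∩ convexHull ℝ (A k ∪ {x k})).Nonempty ∧
      (∃ y ∈ A k, y ≠ x k) := by
  obtain ⟨⟨hxs, hx1⟩, hx2⟩ := hx
  simp only [mem_iUnion, exists_prop] at hx1 hx2
  obtain ⟨A₁, ⟨hA₁, hn₁⟩, hxA₁⟩ := hx1
  obtain ⟨A₂, ⟨hA₂, hn₂⟩, hxA₂⟩ := hx2
  by_cases hxS : x ∈ TSpline.skel T i
  · -- `A₂` has a projected point off the skeleton, whereas `x` is on it.
    obtain ⟨u, huP, huS⟩ : ∃ u ∈ TSpline.toSet (TSpline.proj A₂ i n), u ∉ TSpline.skel T i := by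
      by_contra hcon
      push Not at hcon
      exact hn₂ ⟨hn, hcon⟩
    obtain ⟨J, Q, k, hJ, hdata, ⟨z, hz, hzJ⟩, ⟨y, hyQ, hy⟩, hne'⟩ :=
      TSpline.exists_tjunction_on_segment T (TSpline.proj_subset_slice T hA₂.1 hn huP) hxs huS hxS
    have huk : u k ∈ A₂ k := TSpline.mem_proj_of_ne huP hdata.2.2.2.1.symm
    exact ⟨A₂, hA₂, hxA₂, J, Q, k, hJ, hdata,
      ⟨z, hzJ, segment_subset_convexHull (.inl huP) (.inr rfl) hz⟩,
      ⟨y, hyQ, segment_subset_convexHull (.inl huk) (.inr rfl) hy⟩, u k, huk, hne'⟩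
  · -- The projection of `A₁` lies in the skeleton, whereas `x` does not.
    obtain ⟨w, hwP⟩ : (TSpline.toSet (TSpline.proj A₁ i n)).Nonempty := by
      obtain ⟨a, ha⟩ := TSpline.toSet_nonempty T hA₁.1
      refine ⟨Function.update a i n, TSpline.mem_toSet.2 fun l => ?_⟩
      by_cases hl : l = i
      · subst hl; simp [TSpline.proj]
      · simpa [TSpline.proj, hl] using TSpline.mem_toSet.1 ha l
    obtain ⟨J, Q, k, hJ, hdata, ⟨z, hz, hzJ⟩, ⟨y, hyQ, hy⟩, hne'⟩ :=
      TSpline.exists_tjunction_on_segment T hxs (TSpline.proj_subset_slice T hA₁.1 hn hwP) hxS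
        (hn₁.2 hwP)
    have hwk : w k ∈ A₁ k := TSpline.mem_proj_of_ne hwP hdata.2.2.2.1.symm
    exact ⟨A₁, hA₁, hxA₁, J, Q, k, hJ, hdata,
      ⟨z, hzJ, segment_subset_convexHull (.inr rfl) (.inl hwP) hz⟩,
      ⟨y, hyQ, segment_subset_convexHull (.inr rfl) (.inl hwk) hy⟩, w k, hwk, hne'.symm⟩
end

section
/- Let d ≥ 3 and let 𝒯 be an admissible T-mesh of Ω with degrees p ∈ ℕ^d. Then 𝒯 is abstractly analysis-suitable (AAS) if and only if it is strongly dual-compatible (SDC). -/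
/-!
The result is a statement about the pattern of knot-vector disagreements, resting on the fact
that each local knot vector is a block of consecutive entries of its global knot vector.

If `v_k(A)` and `v_k(B)` overlap, then an integer `n` in both of their convex hulls lies in
`gv_k(A)` iff it lies in `gv_k(B)` (`mem_iff_of_overlaps`). If they do not overlap, some `n` in
both hulls lies in exactly one of `gv_k(A)`, `gv_k(B)` (`exists_of_not_overlaps`).

AAS implies SDC: if `A`, `B` have a common support point and disagree in two directions `i ≠ j`,
witnessed by `n` and `m`, then replacing the `i`-th and `j`-th coordinates of that point by `n`
and `m` gives a point of `ATJ_i(n) ∩ ATJ_j(m)`.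

SDC implies AAS: a point of `ATJ_i(n) ∩ ATJ_j(m)` lies in the supports of anchors `A₁`, `A₂`
that disagree about `n ∈ gv_i` and of anchors `A₃`, `A₄` that disagree about `m ∈ gv_j`. By SDC,
`A₁` and `A₂` agree about `m ∈ gv_j`, and `A₃` and `A₄` agree about `n ∈ gv_i`. Hence one of
`A₁`, `A₂` disagrees with one of `A₃`, `A₄` about both, which SDC forbids.
-/

open Set

namespace TSpline

/-! ### Overlap of blocks of consecutive knots -/

/-- The convex hull of a set of integers is its order-convex hull. -/
lemma mem_convOf_iff {V : Set ℕ} {r : ℝ} :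
    r ∈ convOf V ↔ ∃ a ∈ V, ∃ b ∈ V, (a : ℝ) ≤ r ∧ r ≤ b := by
  constructor
  · intro h
    have hconv : Convex ℝ {r : ℝ | ∃ a ∈ V, ∃ b ∈ V, (a : ℝ) ≤ r ∧ r ≤ b} := by
      apply Set.OrdConnected.convex
      constructor
      rintro x ⟨a, ha, -, -, hax, -⟩ y ⟨-, -, b, hb, -, hyb⟩ z ⟨hxz, hzy⟩
      exact ⟨a, ha, b, hb, hax.trans hxz, hzy.trans hyb⟩
    refine convexHull_min ?_ hconv h
    rintro _ ⟨n, hn, rfl⟩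
    exact ⟨n, hn, n, hn, le_rfl, le_rfl⟩
  · rintro ⟨a, ha, b, hb, har, hrb⟩
    exact (convex_convexHull ℝ _).ordConnected.out
      (subset_convexHull ℝ _ (mem_image_of_mem _ ha))
      (subset_convexHull ℝ _ (mem_image_of_mem _ hb)) ⟨har, hrb⟩

lemma IsBlockOf.mem_iff {V G : Set ℕ} (h : IsBlockOf V G) {n : ℕ}
    (hn : (n : ℝ) ∈ convOf V) : n ∈ V ↔ n ∈ G := by
  obtain ⟨a, ha, b, hb, han, hnb⟩ := mem_convOf_iff.1 hn
  exact ⟨fun hV => h.1 hV,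
    fun hG => h.2.2 n hG a ha b hb (by exact_mod_cast han) (by exact_mod_cast hnb)⟩

lemma mem_iff_of_overlaps {V₁ V₂ G₁ G₂ : Set ℕ} (h₁ : IsBlockOf V₁ G₁)
    (h₂ : IsBlockOf V₂ G₂) (h : Overlaps V₁ V₂) {n : ℕ} (hn₁ : (n : ℝ) ∈ convOf V₁)
    (hn₂ : (n : ℝ) ∈ convOf V₂) : n ∈ G₁ ↔ n ∈ G₂ := by
  obtain ⟨W, -, hW₁, hW₂⟩ := h
  rw [← h₁.mem_iff hn₁, ← h₂.mem_iff hn₂, hW₁.mem_iff hn₁, hW₂.mem_iff hn₂]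

/-- The union `V₁ ∪ V₂` is the canonical candidate for a common knot vector; when it fails,
an entry of one vector lies strictly between entries of the other. -/
lemma exists_of_not_overlaps {V₁ V₂ G₁ G₂ : Set ℕ} (h₁ : IsBlockOf V₁ G₁)
    (h₂ : IsBlockOf V₂ G₂) (h : ¬ Overlaps V₁ V₂) :
    ∃ n : ℕ, (n : ℝ) ∈ convOf V₁ ∧ (n : ℝ) ∈ convOf V₂ ∧
      ((n ∈ G₁ ∧ n ∉ G₂) ∨ (n ∈ G₂ ∧ n ∉ G₁)) := by
  by_contra hcon
  push Not at hcon
  refine h ⟨V₁ ∪ V₂, h₁.2.1.union h₂.2.1, ⟨subset_union_left, h₁.2.1, ?_⟩,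
    ⟨subset_union_right, h₂.2.1, ?_⟩⟩
  · intro g hg a ha b hb hag hgb
    rcases hg with hg | hg
    · exact hg
    · have hg₁ : (g : ℝ) ∈ convOf V₁ :=
        mem_convOf_iff.2 ⟨a, ha, b, hb, by exact_mod_cast hag, by exact_mod_cast hgb⟩
      have hg₂ : (g : ℝ) ∈ convOf V₂ := mem_convOf_iff.2 ⟨g, hg, g, hg, le_rfl, le_rfl⟩
      exact (h₁.mem_iff hg₁).2 ((hcon g hg₁ hg₂).2 (h₂.1 hg))
  · intro g hg a ha b hb hag hgb
    rcases hg with hg | hg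
    · have hg₂ : (g : ℝ) ∈ convOf V₂ :=
        mem_convOf_iff.2 ⟨a, ha, b, hb, by exact_mod_cast hag, by exact_mod_cast hgb⟩
      have hg₁ : (g : ℝ) ∈ convOf V₁ := mem_convOf_iff.2 ⟨g, hg, g, hg, le_rfl, le_rfl⟩
      exact (h₂.mem_iff hg₂).2 ((hcon g hg₁ hg₂).1 (h₁.1 hg))
    · exact hg

/-! ### Anchor supports -/

section Anchors

variable {d : ℕ} {N p : Fin d → ℕ} {T : TMesh d N}

/-- A point of the support rules out the default value `∅` of `anchorKV`, so the chosen set is a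
genuine local knot vector. -/
lemma isBlockOf_anchorKV {A : Box d} {x : Fin d → ℝ} (hx : x ∈ suppA T p A) (k : Fin d) :
    IsBlockOf (anchorKV T p A k) (gv T k A) := by
  obtain ⟨a, ha, -⟩ := mem_convOf_iff.1 (hx k (mem_univ k))
  unfold anchorKV at ha ⊢
  split_ifs at ha ⊢ with h
  · exact h.choose_spec.1
  · exact ha.elim

lemma mem_domain_of_mem_suppA {A : Box d} {x : Fin d → ℝ} (hx : x ∈ suppA T p A) :
    x ∈ domain N := by
  intro k _
  obtain ⟨a, -, b, hb, hax, hxb⟩ := mem_convOf_iff.1 (hx k (mem_univ k))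
  have hbN : b ≤ N k := ((isBlockOf_anchorKV hx k).1 hb).1
  exact ⟨(Nat.cast_nonneg a).trans hax, hxb.trans (by exact_mod_cast hbN)⟩

/-- At least `d - 1` directions satisfy `P` iff no two distinct directions both violate it. -/
lemma le_ncard_iff (hd : 3 ≤ d) (P : Fin d → Prop) :
    d - 1 ≤ {k | P k}.ncard ↔ ∀ i j, i ≠ j → P i ∨ P j := by
  have hc : {k | P k}.ncard + {k | P k}ᶜ.ncard = d := by
    simpa using Set.ncard_add_ncard_compl {k | P k}
  have h1 : {k | P k}ᶜ.ncard ≤ 1 ↔ ∀ i j, i ≠ j → P i ∨ P j := by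
    rw [Set.ncard_le_one]
    constructor
    · intro h i j hij
      by_contra! hn
      exact hij (h i hn.1 j hn.2)
    · intro h i hi j hj
      by_contra hij
      exact (h i j hij).elim hi hj
  rw [← h1]
  omega

/-- Under strong dual-compatibility, two anchors with a common support point cannot disagree
about knots through that point in two different directions. -/
lemma SDC.agree (hd : 3 ≤ d) (h : SDC T p) {A B : Box d} (hA : IsAnchor p T A)
    (hB : IsAnchor p T B) {x : Fin d → ℝ} (hxA : x ∈ suppA T p A) (hxB : x ∈ suppA T p B)
    {i j : Fin d} (hij : i ≠ j) {n m : ℕ} (hn : x i = n) (hm : x j = m) :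
    (n ∈ gv T i A ↔ n ∈ gv T i B) ∨ (m ∈ gv T j A ↔ m ∈ gv T j B) := by
  rcases eq_or_ne A B with rfl | hAB
  · exact Or.inl Iff.rfl
  rcases h A B hA hB hAB with hemp | hcard
  · exact absurd (show x ∈ suppA T p A ∩ suppA T p B from ⟨hxA, hxB⟩) (by simp [hemp])
  · have key : ∀ (k : Fin d) (l : ℕ), x k = l →
        Overlaps (anchorKV T p A k) (anchorKV T p B k) → (l ∈ gv T k A ↔ l ∈ gv T k B) :=
      fun k l hl ho => mem_iff_of_overlaps (isBlockOf_anchorKV hxA k)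
        (isBlockOf_anchorKV hxB k) ho (hl ▸ hxA k (mem_univ k)) (hl ▸ hxB k (mem_univ k))
    exact ((le_ncard_iff hd _).1 hcard i j hij).imp (key i n hn) (key j m hm)

lemma mem_ATJ_iff {j : Fin d} {n : ℕ} {x : Fin d → ℝ} :
    x ∈ ATJ T p j n ↔ x j = n ∧
      (∃ A, IsAnchor p T A ∧ n ∈ gv T j A ∧ x ∈ suppA T p A) ∧
      (∃ A, IsAnchor p T A ∧ n ∉ gv T j A ∧ x ∈ suppA T p A) := by
  simp only [ATJ, slice, mem_inter_iff, mem_ofPred_eq, mem_iUnion, exists_prop, and_assoc]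
  constructor
  · rintro ⟨-, h, hA, hB⟩
    exact ⟨h, hA, hB⟩
  · rintro ⟨h, ⟨A, hA⟩, hB⟩
    exact ⟨mem_domain_of_mem_suppA hA.2.2, h, ⟨A, hA⟩, hB⟩

end Anchors

end TSpline

open TSpline in
/-- An admissible T-mesh (`d ≥ 3`) is abstractly analysis-suitable if
and only if it is strongly dual-compatible. -/
theorem TSpline.aas_iff_sdc
    {d : ℕ} {N p : Fin d → ℕ} (hd : 3 ≤ d) (T : TSpline.TMesh d N)
    (hadm : TSpline.Admissible p T) :
    TSpline.AAS T p ↔ TSpline.SDC T p := by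
  
  constructor
  · intro h A B hA hB _
    by_contra hcon
    simp only [StrongPartOverlap, not_or, le_ncard_iff hd] at hcon
    obtain ⟨hne, hbad⟩ := hcon
    push Not at hbad
    obtain ⟨i, j, hij, hi, hj⟩ := hbad
    obtain ⟨x, hxA, hxB⟩ := Set.nonempty_iff_ne_empty.2 hne
    obtain ⟨n, hnA, hnB, hn⟩ := exists_of_not_overlaps (isBlockOf_anchorKV hxA i)
      (isBlockOf_anchorKV hxB i) hi
    obtain ⟨m, hmA, hmB, hm⟩ := exists_of_not_overlaps (isBlockOf_anchorKV hxA j)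
      (isBlockOf_anchorKV hxB j) hj
    -- Supports are boxes, so moving two coordinates to `n` and `m` stays in both of them.
    let y : Fin d → ℝ := Function.update (Function.update x i n) j m
    have hyi : y i = n := by simp [y, hij]
    have hyj : y j = m := by simp [y]
    have hy : ∀ C, x ∈ suppA T p C → (n : ℝ) ∈ convOf (anchorKV T p C i) →
        (m : ℝ) ∈ convOf (anchorKV T p C j) → y ∈ suppA T p C := by
      intro C hxC hnC hmC k _
      by_cases hkj : k = j
      · subst hkj; rwa [hyj]
      by_cases hki : k = i
      · subst hki; rwa [hyi]
      · simpa [y, hkj, hki] using hxC k (Set.mem_univ k)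
    have hyA := hy A hxA hnA hmA
    have hyB := hy B hxB hnB hmB
    have hATJ : ∀ (k : Fin d) (l : ℕ), y k = l →
        ((l ∈ gv T k A ∧ l ∉ gv T k B) ∨ (l ∈ gv T k B ∧ l ∉ gv T k A)) →
        y ∈ ATJ T p k l := by
      rintro k l hkl (⟨h₁, h₂⟩ | ⟨h₁, h₂⟩)
      · exact mem_ATJ_iff.2 ⟨hkl, ⟨A, hA, h₁, hyA⟩, ⟨B, hB, h₂, hyB⟩⟩
      · exact mem_ATJ_iff.2 ⟨hkl, ⟨B, hB, h₁, hyB⟩, ⟨A, hA, h₂, hyA⟩⟩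
    have hnN : n ≤ N i := by rcases hn with hn | hn <;> exact hn.1.1
    have hmN : m ≤ N j := by rcases hm with hm | hm <;> exact hm.1.1
    have hmem : y ∈ ATJ T p i n ∩ ATJ T p j m := ⟨hATJ i n hyi hn, hATJ j m hyj hm⟩
    rw [h i j hij n m hnN hmN] at hmem
    exact hmem
  · intro h i j hij n m _ _
    rw [Set.eq_empty_iff_forall_notMem]
    rintro x ⟨hxi, hxj⟩
    obtain ⟨hn, ⟨A₁, hA₁, h₁, hx₁⟩, ⟨A₂, hA₂, h₂, hx₂⟩⟩ := mem_ATJ_iff.1 hxi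
    obtain ⟨hm, ⟨A₃, hA₃, h₃, hx₃⟩, ⟨A₄, hA₄, h₄, hx₄⟩⟩ := mem_ATJ_iff.1 hxj
    -- Comparing every pair of the four anchors leaves no consistent choice of truth values.
    have h12 := h.agree hd hA₁ hA₂ hx₁ hx₂ hij hn hm
    have h34 := h.agree hd hA₃ hA₄ hx₃ hx₄ hij hn hm
    have h13 := h.agree hd hA₁ hA₃ hx₁ hx₃ hij hn hm
    have h14 := h.agree hd hA₁ hA₄ hx₁ hx₄ hij hn hm
    have h23 := h.agree hd hA₂ hA₃ hx₂ hx₃ hij hn hm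
    have h24 := h.agree hd hA₂ hA₄ hx₂ hx₄ hij hn hm
    clear * - h₁ h₂ h₃ h₄ h12 h34 h13 h14 h23 h24
    grind only
end
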